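/- Let n ≥ 2 and suppose φ₁ : Ω → ℝ satisfies c₁ d₁(x)^{α₁} ⋯ d_n(x)^{α_n} ≤ φ₁(x) ≤ c₂ d₁(x)^{α₁} ⋯ d_n(x)^{α_n} for all x ∈ Ω, with positive constants c₁, c₂ and exponents α_k ≥ −(k−2)/2 for k = 1,…,n. Then the C₀^∞(Ω) functions are dense in the weighted Sobolev space H¹(Ω; φ₁²) = { v ∈ L²(Ω, φ₁² dx) : ∫_Ω φ₁² |∇v|² dx < ∞ } equipped with the norm ‖v‖² = ∫_Ω φ₁² ( v² + |∇v|² ) dx. -/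

import Mathlib

/-!
The theorem says that the boundary has zero capacity for the weight `φ²`, so that functions of
the weighted space can be cut off near `∂Ω` at arbitrarily small cost.

* *Geometry.* Straightening a submersion locally shows that the tube of radius `r` around a compact
  submanifold of codimension `k` has volume `O(r ^ k)` (`volume_tube`). Near `Γ_k` the other
  distances are bounded above and below, so `φ² = O(d_k ^ (2 α_k)) = O(d_k ^ (2 - k))` by the
  condition on the exponents. Hence the shell `r / 2 < dist(·, Ωᶜ) ≤ r` has `φ²`-mass `O(r ^ 2)`
  (`shell_mass`).
* *Cutoffs.* A transition from `0` to `1` in one shell of radius `r` has slope `O(1 / r)` and thus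
  weighted Dirichlet energy `O(1)`. The average of the transitions in `N` disjoint dyadic shells
  has energy `O(1 / N)` (`exists_cutoff`).
* *Truncation.* With `M` large and `η` a cutoff of energy much smaller than `M ^ (-2)`, the
  function `η M sin (v / M)` is close to `v` (`truncation_approx`): the term with `∇η` is at most
  `M |∇η|`, and dominated convergence handles the rest. The smooth truncation `M sin (· / M)`
  avoids a chain rule for Lipschitz functions.
* *Smoothing.* On the support of `η` the weight is bounded above and below, so `v` is there an
  unweighted `H¹` function and may be replaced in `η M sin (v / M)` by its mollifications
  (`gradient_mollify`, `smooth_approx`).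

Two conventions need separate care. The distance to an empty piece is `0`, so an empty piece with a
nonzero exponent makes the weight vanish, and then there is nothing to prove. No measurability of
`φ`, `v`, `g` separately is assumed: if for some test function the integrand of the norm is not
measurable, its Bochner integral is `0`; otherwise measurability of `φ`, `v`, `g` follows by
comparing suitable test functions (`aemeasurable_data`).
-/

open MeasureTheory Metric Set Real Filter

noncomputable section

/-- Euclidean space `ℝⁿ`. -/
abbrev Euc (n : ℕ) := EuclideanSpace ℝ (Fin n)

/-- Smooth functions compactly supported in `Ω`. -/
def IsTest {n : ℕ} (Ω : Set (Euc n)) (u : Euc n → ℝ) : Prop :=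
  ContDiff ℝ (⊤ : ℕ∞) u ∧ HasCompactSupport u ∧ tsupport u ⊆ Ω

/-- `S` is a boundaryless `C²` submanifold of `ℝⁿ` of codimension `k`, described locally
as a regular level set of a `C²` submersion. -/
def IsC2Submanifold {n : ℕ} (k : ℕ) (S : Set (Euc n)) : Prop :=
  ∀ p ∈ S, ∃ (U : Set (Euc n)) (f : Euc n → EuclideanSpace ℝ (Fin k)),
    IsOpen U ∧ p ∈ U ∧ ContDiff ℝ 2 f ∧
    (∀ x ∈ U, Function.Surjective (fderiv ℝ f x)) ∧
    S ∩ U = {x ∈ U | f x = 0}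

/-- A bounded domain `Ω ⊆ ℝⁿ` whose boundary decomposes as `∂Ω = ⋃ k, Γ k`, where
`Γ k` (for `k : Fin n`, representing codimension `(k:ℕ)+1`) is a finite union of
pairwise disjoint compact boundaryless `C²` submanifolds of codimension `(k:ℕ)+1`
when `(k:ℕ)+1 < n`, while the codimension-`n` piece is a finite set of points;
all the pieces are pairwise disjoint. -/
structure Setting (n : ℕ) where
  Ω : Set (Euc n)
  Γ : Fin n → Set (Euc n)
  isOpen : IsOpen Ω
  nonempty : Ω.Nonempty
  connected : IsConnected Ω
  bounded : Bornology.IsBounded Ω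
  boundary_eq : frontier Ω = ⋃ k, Γ k
  disjoint : ∀ k l : Fin n, k ≠ l → Disjoint (Γ k) (Γ l)
  pieces : ∀ k : Fin n, (k : ℕ) + 1 < n →
    ∃ (m : ℕ) (G : Fin m → Set (Euc n)), Γ k = ⋃ j, G j ∧
      (∀ j, IsCompact (G j) ∧ IsC2Submanifold ((k : ℕ) + 1) (G j)) ∧
      (∀ i j, i ≠ j → Disjoint (G i) (G j))
  points : ∀ k : Fin n, (k : ℕ) + 1 = n → (Γ k).Finite

/-- `d_k(x)`, the distance from `x` to the boundary piece of codimension `(k:ℕ)+1`. -/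
def dΓ {n : ℕ} (S : Setting n) (k : Fin n) (x : Euc n) : ℝ := infDist x (S.Γ k)

/-- `d(x)`, the distance from `x` to the boundary of `Ω`. -/
def dB {n : ℕ} (S : Setting n) (x : Euc n) : ℝ := infDist x (frontier S.Ω)

/-- Uniform ellipticity (with symmetry) of the coefficient matrix `a` on `Ω`. -/
def Elliptic {n : ℕ} (Ω : Set (Euc n)) (a : Euc n → Fin n → Fin n → ℝ) : Prop :=
  ∃ C₀ : ℝ, 0 < C₀ ∧ ∀ x ∈ Ω, (∀ i j, a x i j = a x j i) ∧
    ∀ ξ : Fin n → ℝ,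
      C₀ * (∑ i, (ξ i) ^ 2) ≤ (∑ i, ∑ j, a x i j * ξ i * ξ j) ∧
      (∑ i, ∑ j, a x i j * ξ i * ξ j) ≤ C₀⁻¹ * (∑ i, (ξ i) ^ 2)

/-- The quadratic form `Q[u] = ∫_Ω (Σ a_{ij} ∂_i u ∂_j u - V u²)`. -/
def Qf {n : ℕ} (Ω : Set (Euc n)) (a : Euc n → Fin n → Fin n → ℝ) (V : Euc n → ℝ)
    (u : Euc n → ℝ) : ℝ :=
  ∫ x in Ω, ((∑ i, ∑ j, a x i j * gradient u x i * gradient u x j) - V x * (u x) ^ 2)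

/-- The set of Rayleigh quotients of the form `Q`. -/
def RayleighSet {n : ℕ} (Ω : Set (Euc n)) (a : Euc n → Fin n → Fin n → ℝ)
    (V : Euc n → ℝ) : Set ℝ :=
  { r : ℝ | ∃ u, IsTest Ω u ∧ (∫ x in Ω, (u x) ^ 2) ≠ 0 ∧
      r = Qf Ω a V u / ∫ x in Ω, (u x) ^ 2 }

/-- `g` is the weak (distributional) gradient of `φ` on `Ω`. -/
def IsWeakGradOn {n : ℕ} (Ω : Set (Euc n)) (φ : Euc n → ℝ) (g : Euc n → Fin n → ℝ) :
    Prop :=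
  ∀ ψ, IsTest Ω ψ → ∀ i, ∫ x in Ω, φ x * gradient ψ x i = -∫ x in Ω, g x i * ψ x

/-- `φ` (with weak gradient `g`) is a generalized ground state for the form `Q` with
generalized first eigenvalue `lam1`: it lies in `H¹_loc(Ω) ∩ L^∞_loc(Ω)` and satisfies
`∫ Σ a_{ij} ∂_i φ ∂_j ψ = ∫ (V + lam1) φ ψ` for every test function `ψ`. -/
def IsGroundState {n : ℕ} (Ω : Set (Euc n)) (a : Euc n → Fin n → Fin n → ℝ)
    (V : Euc n → ℝ) (lam1 : ℝ) (φ : Euc n → ℝ) (g : Euc n → Fin n → ℝ) : Prop :=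
  IsWeakGradOn Ω φ g ∧
  (∀ K, IsCompact K → K ⊆ Ω →
    IntegrableOn (fun x => (φ x) ^ 2 + ∑ i, (g x i) ^ 2) K volume ∧
    ∃ C, ∀ x ∈ K, |φ x| ≤ C) ∧
  ∀ ψ, IsTest Ω ψ →
    (∫ x in Ω, ∑ i, ∑ j, a x i j * g x i * gradient ψ x j)
      = ∫ x in Ω, (V x + lam1) * φ x * ψ x

open scoped Topology ENNReal NNReal Convolution

/-! ### Mollification and weak gradients -/

/-- The family of standard mollifiers, supported in the ball of radius `2 / (m + 1)`. -/
def mol (n m : ℕ) : ContDiffBump (0 : Euc n) where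
  rIn := 1 / ((m : ℝ) + 1)
  rOut := 2 / ((m : ℝ) + 1)
  rIn_pos := by positivity
  rIn_lt_rOut := by gcongr; norm_num

/-- The mollification of `f` at scale `2 / (m + 1)`. -/
def mollify {n : ℕ} (m : ℕ) (f : Euc n → ℝ) : Euc n → ℝ :=
  ((mol n m).normed volume) ⋆[ContinuousLinearMap.lsmul ℝ ℝ, volume] f

lemma mollify_apply {n : ℕ} (m : ℕ) (f : Euc n → ℝ) (x : Euc n) :
    mollify m f x = ∫ y, (mol n m).normed volume (x - y) * f y := by
  unfold mollify
  rw [convolution_eq_swap]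
  simp

lemma mol_rOut_tendsto (n : ℕ) : Tendsto (fun m => (mol n m).rOut) atTop (𝓝 0) := by
  have := (tendsto_one_div_add_atTop_nhds_zero_nat (𝕜 := ℝ)).const_mul 2
  simp only [mul_zero] at this
  refine this.congr fun m => ?_
  simp only [mol]
  ring

lemma mollify_ae_tendsto {n : ℕ} {f : Euc n → ℝ} (hf : LocallyIntegrable f volume) :
    ∀ᵐ x, Tendsto (fun m => mollify m f x) atTop (𝓝 (f x)) := by
  refine ContDiffBump.ae_convolution_tendsto_right_of_locallyIntegrable (K := 2)
    (mol_rOut_tendsto n) (Eventually.of_forall fun m => ?_) hf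
  simp only [mol]
  apply le_of_eq
  ring

lemma mol_int {n : ℕ} (m : ℕ) (x : Euc n) {h : Euc n → ℝ} (hh : Integrable h) :
    Integrable (fun y => (mol n m).normed volume (x - y) * h y) := by
  have hc : Continuous (fun y : Euc n => (mol n m).normed volume (x - y)) :=
    (mol n m).continuous_normed.comp (by fun_prop)
  obtain ⟨C, hC⟩ := (mol n m).continuous_normed (μ := volume) |>.bounded_above_of_compact_support
    (mol n m).hasCompactSupport_normed
  exact hh.bdd_mul hc.aestronglyMeasurable (Eventually.of_forall fun y => hC _)

lemma mollify_integral_one {n : ℕ} (m : ℕ) (x : Euc n) :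
    ∫ y, (mol n m).normed volume (x - y) = 1 := by
  rw [integral_sub_left_eq_self (fun y => (mol n m).normed volume y) volume x]
  exact (mol n m).integral_normed

/-- The Jensen inequality for the probability density `ρ (x - ·)`. -/
lemma mollify_sq_le {n : ℕ} (m : ℕ) (f : Euc n → ℝ) (hf : Integrable f)
    (hf2 : Integrable (fun x => f x ^ 2)) (x : Euc n) :
    mollify m f x ^ 2 ≤ mollify m (fun x => f x ^ 2) x := by
  set a := mollify m f x with ha
  set ρ : Euc n → ℝ := fun y => (mol n m).normed volume (x - y) with hρ
  have i1 : Integrable (fun y => ρ y * f y) := mol_int m x hf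
  have i2 : Integrable (fun y => ρ y * f y ^ 2) := mol_int m x hf2
  have i0 : Integrable ρ := by
    by_contra h
    have := mollify_integral_one m x
    rw [integral_undef h] at this
    norm_num at this
  -- expand the nonnegative quantity `∫ ρ (f - a)²`
  have key : 0 ≤ ∫ y, ρ y * (f y - a) ^ 2 :=
    integral_nonneg fun y => mul_nonneg ((mol n m).nonneg_normed _) (sq_nonneg _)
  have e : ∫ y, ρ y * (f y - a) ^ 2 =
      ∫ y, (ρ y * f y ^ 2 - (2 * a) * (ρ y * f y) + a ^ 2 * ρ y) := by
    congr 1; ext y; ring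
  have i3 : Integrable (fun y => ρ y * f y ^ 2 - (2 * a) * (ρ y * f y)) :=
    i2.sub (i1.const_mul _)
  rw [e, integral_add i3 (i0.const_mul _),
    integral_sub i2 (i1.const_mul _), integral_const_mul, integral_const_mul,
    mollify_integral_one m x, ← mollify_apply m f x, ← ha,
    ← mollify_apply m (fun y => f y ^ 2) x] at key
  nlinarith

/-- Mollifications converge in `L²`. The Fatou lemma is applied to the nonnegative functions
`2 ρ_m ⋆ f² + 2 f² - (ρ_m ⋆ f - f)²`, whose first two terms have the constant integral `4 ∫ f²`. -/
lemma mollify_tendsto_L2 {n : ℕ} {f : Euc n → ℝ} (hf : Integrable f)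
    (hf2 : Integrable (fun x => f x ^ 2)) :
    Tendsto (fun m => ∫⁻ x, ENNReal.ofReal ((mollify m f x - f x) ^ 2)) atTop (𝓝 0) := by
  set h : ℕ → Euc n → ℝ := fun m => mollify m (fun x => f x ^ 2) with hh
  have hint : ∀ m, Integrable (h m) := fun m =>
    Integrable.integrable_convolution (ContinuousLinearMap.lsmul ℝ ℝ)
      ((mol n m).continuous_normed.integrable_of_hasCompactSupport
        (mol n m).hasCompactSupport_normed) hf2
  have uint : ∀ m, Integrable (mollify m f) := fun m =>
    Integrable.integrable_convolution (ContinuousLinearMap.lsmul ℝ ℝ)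
      ((mol n m).continuous_normed.integrable_of_hasCompactSupport
        (mol n m).hasCompactSupport_normed) hf
  have hval : ∀ m, ∫ x, h m x = ∫ x, f x ^ 2 := fun m => by
    have := integral_convolution (μ := (volume : Measure (Euc n))) (ν := volume)
      (ContinuousLinearMap.lsmul ℝ ℝ)
      ((mol n m).continuous_normed (μ := volume) |>.integrable_of_hasCompactSupport
        (mol n m).hasCompactSupport_normed) hf2
    rw [(mol n m).integral_normed] at this
    simpa [hh, mollify] using this
  set F : ℕ → Euc n → ℝ := fun m x => 2 * h m x + 2 * f x ^ 2 - (mollify m f x - f x) ^ 2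
  have hF : ∀ m x, 0 ≤ F m x := fun m x => by
    have := mollify_sq_le m f hf hf2 x
    simp only [F, hh]
    nlinarith [sq_nonneg (mollify m f x + f x)]
  set c := ENNReal.ofReal (4 * ∫ x, f x ^ 2)
  have hsum : ∀ m, (∫⁻ x, ENNReal.ofReal ((mollify m f x - f x) ^ 2)) +
      ∫⁻ x, ENNReal.ofReal (F m x) = c := fun m => by
    have hm : AEMeasurable (fun x => ENNReal.ofReal ((mollify m f x - f x) ^ 2)) :=
      ((uint m).sub hf).aestronglyMeasurable.aemeasurable.pow_const 2 |>.ennreal_ofReal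
    rw [← lintegral_add_left' hm]
    have : ∫ x, (2 * h m x + 2 * f x ^ 2) = 4 * ∫ x, f x ^ 2 := by
      rw [integral_add ((hint m).const_mul 2) (hf2.const_mul 2), integral_const_mul,
        integral_const_mul, hval]
      ring
    have h2 : Integrable (fun x => 2 * h m x + 2 * f x ^ 2) :=
      ((hint m).const_mul 2).add (hf2.const_mul 2)
    rw [show c = ENNReal.ofReal (4 * ∫ x, f x ^ 2) from rfl, ← this,
      ofReal_integral_eq_lintegral_ofReal h2
        (Eventually.of_forall fun x => by
          have := (sq_nonneg _).trans (mollify_sq_le m f hf hf2 x)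
          simp only [Pi.zero_apply, hh]; positivity)]
    congr 1; ext x
    rw [← ENNReal.ofReal_add (sq_nonneg _) (hF m x)]
    congr 1
    simp only [F]; ring
  have hb : Tendsto (fun m => ∫⁻ x, ENNReal.ofReal (F m x)) atTop (𝓝 c) := by
    refine tendsto_of_le_liminf_of_limsup_le ?_ ?_
    · have h1 : c = ∫⁻ x, liminf (fun m => ENNReal.ofReal (F m x)) atTop := by
        rw [show c = ENNReal.ofReal (4 * ∫ x, f x ^ 2) from rfl, ← integral_const_mul,
          ofReal_integral_eq_lintegral_ofReal (hf2.const_mul 4)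
          (Eventually.of_forall fun x => by simp only [Pi.zero_apply]; positivity)]
        refine lintegral_congr_ae ?_
        filter_upwards [mollify_ae_tendsto hf.locallyIntegrable,
          mollify_ae_tendsto hf2.locallyIntegrable] with x h1 h2
        have h3 : Tendsto (fun m => F m x) atTop
            (𝓝 (2 * f x ^ 2 + 2 * f x ^ 2 - (f x - f x) ^ 2)) :=
          ((h2.const_mul 2).add_const _).sub ((h1.sub_const _).pow 2)
        have h4 := (ENNReal.tendsto_ofReal h3).liminf_eq
        rw [h4]; congr 1; ring
      rw [h1]
      refine lintegral_liminf_le' fun m => ?_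
      exact (((hint m).const_mul 2).add (hf2.const_mul 2)).aestronglyMeasurable.aemeasurable.sub
        (((uint m).sub hf).aestronglyMeasurable.aemeasurable.pow_const 2) |>.ennreal_ofReal
    · refine (limsup_le_limsup (Eventually.of_forall fun m =>
        (hsum m) ▸ le_add_self)).trans ?_
      simp
  have hsub := ENNReal.Tendsto.sub (tendsto_const_nhds (x := c) (f := atTop)) hb
    (Or.inl ENNReal.ofReal_ne_top)
  rw [tsub_self] at hsub
  refine hsub.congr fun m => ?_
  have hfin : ∫⁻ x, ENNReal.ofReal (F m x) ≠ ∞ :=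
    ne_top_of_le_ne_top (b := c) (ENNReal.ofReal_ne_top) ((hsum m) ▸ le_add_self)
  rw [← hsum m, ENNReal.add_sub_cancel_right hfin]

lemma grad_apply {n : ℕ} (f : Euc n → ℝ) (x : Euc n) (i : Fin n) :
    gradient f x i = fderiv ℝ f x (EuclideanSpace.single i 1) := by
  have : inner ℝ (gradient f x) (EuclideanSpace.single i 1) =
      fderiv ℝ f x (EuclideanSpace.single i 1) := by
    unfold gradient
    rw [InnerProductSpace.toDual_symm_apply]
  rw [← this, EuclideanSpace.inner_single_right]
  simp

lemma contDiff_mollify {n : ℕ} (m : ℕ) {f : Euc n → ℝ} (hf : Integrable f) :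
    ContDiff ℝ (⊤ : ℕ∞) (mollify m f) :=
  (mol n m).hasCompactSupport_normed.contDiff_convolution_left _
    (mol n m).contDiff_normed hf.locallyIntegrable

/-- The derivative of a mollification falls on the mollifier. -/
lemma fderiv_mollify {n : ℕ} (m : ℕ) {f : Euc n → ℝ} (hf : Integrable f) (x e : Euc n) :
    fderiv ℝ (mollify m f) x e =
      ∫ y, fderiv ℝ ((mol n m).normed volume) (x - y) e * f y := by
  have h := (mol n m).hasCompactSupport_normed (μ := volume) |>.hasFDerivAt_convolution_left
    (ContinuousLinearMap.lsmul ℝ ℝ) ((mol n m).contDiff_normed (n := 1)) hf.locallyIntegrable x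
    (μ := volume)
  unfold mollify
  rw [h.fderiv]
  have hex : ConvolutionExistsAt (fderiv ℝ ((mol n m).normed volume)) f x
      ((ContinuousLinearMap.lsmul ℝ ℝ).precompL (Euc n)) volume :=
    ((mol n m).hasCompactSupport_normed (μ := volume) |>.fderiv ℝ).convolutionExists_left _
      ((mol n m).contDiff_normed (n := 1) |>.continuous_fderiv one_ne_zero)
      hf.locallyIntegrable x
  unfold convolution
  rw [ContinuousLinearMap.integral_apply hex,
    ← integral_sub_left_eq_self
      (fun t => fderiv ℝ ((mol n m).normed volume) (x - t) e * f t) volume x]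
  congr 1; ext t
  simp [ContinuousLinearMap.precompL]

lemma isTest_mul_left {n : ℕ} {Ω : Set (Euc n)} {χ a : Euc n → ℝ} (hχ : IsTest Ω χ)
    (ha : ContDiff ℝ (⊤ : ℕ∞) a) : IsTest Ω (fun x => a x * χ x) := by
  refine ⟨ha.mul hχ.1, hχ.2.1.mul_left, ?_⟩
  exact (tsupport_mul_subset_right (f := a)).trans hχ.2.2

/-- Mollification turns the weak gradient of `χ v` into its classical gradient. The identity
comes from testing the weak gradient of `v` with `y ↦ ρ (x - y) χ y`. -/
lemma gradient_mollify {n : ℕ} {Ω : Set (Euc n)} {v : Euc n → ℝ} {g : Euc n → Fin n → ℝ}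
    (hgrad : IsWeakGradOn Ω v g) {χ : Euc n → ℝ} (hχ : IsTest Ω χ)
    (hv : Integrable (fun x => χ x * v x))
    (hv' : ∀ i, Integrable (fun x => gradient χ x i * v x))
    (hg : ∀ i, Integrable (fun x => χ x * g x i)) (m : ℕ) (x : Euc n) (i : Fin n) :
    gradient (mollify m (fun x => χ x * v x)) x i =
      mollify m (fun x => χ x * g x i + gradient χ x i * v x) x := by
  rw [grad_apply, fderiv_mollify m hv, mollify_apply]
  set ρ := (mol n m).normed (volume : Measure (Euc n)) with hρ
  have ρs : ContDiff ℝ (⊤ : ℕ∞) ρ := (mol n m).contDiff_normed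
  have ρs' : ContDiff ℝ (⊤ : ℕ∞) (fun y => ρ (x - y)) := ρs.comp (by fun_prop)
  have χs := hχ.1
  have htest := isTest_mul_left hχ ρs'
  have hD : ∀ y, gradient (fun y => ρ (x - y) * χ y) y i =
      -(fderiv ℝ ρ (x - y) (EuclideanSpace.single i 1) * χ y) + ρ (x - y) * gradient χ y i := by
    intro y
    have h1 : HasFDerivAt (fun y => ρ (x - y))
        ((fderiv ℝ ρ (x - y)).comp (-ContinuousLinearMap.id ℝ (Euc n))) y :=
      ((ρs.differentiable (by simp)) (x - y)).hasFDerivAt.comp y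
        ((hasFDerivAt_id y).const_sub x)
    have h2 : HasFDerivAt (fun y => ρ (x - y) * χ y) _ y := h1.mul ((χs.differentiable (by simp)) y).hasFDerivAt
    rw [grad_apply, grad_apply, h2.fderiv]
    simp
    ring
  have hχ0 : ∀ y, y ∉ Ω → χ y = 0 := fun y hy =>
    image_eq_zero_of_notMem_tsupport fun h => hy (hχ.2.2 h)
  have hχ1 : ∀ y, y ∉ Ω → gradient χ y i = 0 := fun y hy => by
    rw [grad_apply]
    have : fderiv ℝ χ y = 0 := by
      have := support_fderiv_subset ℝ (f := χ)
      by_contra h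
      exact hy (hχ.2.2 (this h))
    simp [this]
  have key := hgrad _ htest i
  rw [setIntegral_eq_integral_of_forall_compl_eq_zero (fun y hy => by
      rw [hD, hχ0 y hy, hχ1 y hy]; simp),
    setIntegral_eq_integral_of_forall_compl_eq_zero (fun y hy => by rw [hχ0 y hy]; simp)] at key
  have hbd : Integrable
      (fun y => fderiv ℝ ρ (x - y) (EuclideanSpace.single i 1) * (χ y * v y)) := by
    have hc : Continuous (fun y : Euc n => fderiv ℝ ρ y (EuclideanSpace.single i 1)) :=
      (ρs.continuous_fderiv (by simp)).clm_apply continuous_const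
    obtain ⟨C, hC⟩ := hc.bounded_above_of_compact_support
      ((mol n m).hasCompactSupport_normed.fderiv_apply ℝ _)
    exact hv.bdd_mul (hc.comp (by fun_prop : Continuous fun y => x - y)).aestronglyMeasurable
      (Eventually.of_forall fun y => hC _)
  have i2 : Integrable (fun y => ρ (x - y) * (gradient χ y i * v y)) := mol_int m x (hv' i)
  have i3 : Integrable (fun y => ρ (x - y) * (χ y * g y i)) := mol_int m x (hg i)
  have e1 : ∫ y, v y * gradient (fun y => ρ (x - y) * χ y) y i =
      -(∫ y, fderiv ℝ ρ (x - y) (EuclideanSpace.single i 1) * (χ y * v y)) +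
        ∫ y, ρ (x - y) * (gradient χ y i * v y) := by
    rw [← integral_neg, ← integral_add (by exact hbd.neg) i2]
    congr 1; ext y
    rw [hD]; ring
  have e2 : ∫ y, ρ (x - y) * (χ y * g y i + gradient χ y i * v y) =
      (∫ y, ρ (x - y) * (χ y * g y i)) + ∫ y, ρ (x - y) * (gradient χ y i * v y) := by
    rw [← integral_add i3 i2]
    congr 1; ext y; ring
  have e3 : ∫ y, g y i * (ρ (x - y) * χ y) = ∫ y, ρ (x - y) * (χ y * g y i) := by
    congr 1; ext y; ring
  rw [e1, e3] at key
  rw [e2]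
  linarith

/-! ### Volume of tubes around the boundary pieces -/

/-- A slab `{‖A y‖ ≤ s}` of codimension `k`, cut off by a ball, has volume `O(s ^ k)`. -/
lemma volume_slab {n k : ℕ} (A : Euc n →L[ℝ] Euc k) (hA : Function.Surjective A) (R : ℝ) :
    ∃ C : ℝ≥0∞, C ≠ ∞ ∧ ∀ s : ℝ, 0 ≤ s →
      volume {y : Euc n | ‖A y‖ ≤ s ∧ ‖y‖ ≤ R} ≤ C * ENNReal.ofReal (s ^ k) := by
  obtain ⟨J, hJ⟩ := A.exists_rightInverse_of_surjective (LinearMap.range_eq_top.2 hA)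
  have hJ' : Function.RightInverse J A := fun y => by
    simpa using DFunLike.congr_fun hJ y
  let e := ContinuousLinearEquiv.equivOfRightInverse A J hJ'
  let μ : Measure (Euc k × A.ker) := (volume : Measure (Euc n)).map e
  have : μ.IsAddHaarMeasure := e.isAddHaarMeasure_map volume
  have hμ := Measure.isAddLeftInvariant_eq_smul μ
    ((volume : Measure (Euc k)).prod (volume : Measure A.ker))
  set c := μ.addHaarScalarFactor ((volume : Measure (Euc k)).prod (volume : Measure A.ker))
  let L := ‖(e : Euc n →L[ℝ] Euc k × A.ker)‖
  let B := volume (closedBall (0 : A.ker) (L * R))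
  refine ⟨c * (volume (ball (0 : Euc k) 1) * B), ?_, fun s hs => ?_⟩
  · have h1 : volume (ball (0 : Euc k) 1) ≠ ∞ := measure_ball_lt_top.ne
    have h2 : B ≠ ∞ := measure_closedBall_lt_top.ne
    exact ENNReal.mul_ne_top ENNReal.coe_ne_top (ENNReal.mul_ne_top h1 h2)
  · have hsub : {y : Euc n | ‖A y‖ ≤ s ∧ ‖y‖ ≤ R} ⊆
        e ⁻¹' (closedBall 0 s ×ˢ closedBall 0 (L * R)) := by
      rintro y ⟨h1, h2⟩
      refine ⟨?_, ?_⟩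
      · have : (e y).1 = A y := rfl
        simpa [this] using h1
      · have : ‖(e y).2‖ ≤ ‖e y‖ := norm_snd_le _
        have h3 : ‖e y‖ ≤ L * ‖y‖ := (e : Euc n →L[ℝ] Euc k × A.ker).le_opNorm y
        have : ‖(e y).2‖ ≤ L * R := this.trans (h3.trans (by gcongr))
        simpa using this
    refine (measure_mono hsub).trans ?_
    rw [← Measure.map_apply e.continuous.measurable
      (isClosed_closedBall.measurableSet.prod isClosed_closedBall.measurableSet)]
    change μ _ ≤ _
    rw [hμ, Measure.smul_apply, Measure.prod_prod, Measure.addHaar_closedBall _ _ hs]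
    simp only [finrank_euclideanSpace, Fintype.card_fin]
    change (c : ℝ≥0∞) * (ENNReal.ofReal (s ^ k) * volume (ball (0 : Euc k) 1) * B) ≤ _
    apply le_of_eq
    ring

/-- Straightening `f` near `p` by `Φ x = J (f x) + x - J (f' x)`, which has derivative the
identity at `p`, turns the sublevel set `{‖f‖ ≤ s}` into a slab. -/
lemma volume_sublevel {n k : ℕ} {f : Euc n → Euc k} (hf : ContDiff ℝ 2 f) (p : Euc n)
    (hs : Function.Surjective (fderiv ℝ f p)) :
    ∃ ρ > 0, ∃ C : ℝ≥0∞, C ≠ ∞ ∧ ∀ s : ℝ, 0 ≤ s →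
      volume {x : Euc n | x ∈ ball p ρ ∧ ‖f x‖ ≤ s} ≤ C * ENNReal.ofReal (s ^ k) := by
  set A := fderiv ℝ f p with hA
  obtain ⟨J, hJ⟩ := A.exists_rightInverse_of_surjective (LinearMap.range_eq_top.2 hs)
  have hJ' : ∀ y, A (J y) = y := fun y => by
    simpa using DFunLike.congr_fun hJ y
  let Φ : Euc n → Euc n := fun x => J (f x) + (x - J (A x))
  have hder : HasStrictFDerivAt f A p := hf.contDiffAt.hasStrictFDerivAt (by norm_num)
  have hΦ : HasStrictFDerivAt Φ (ContinuousLinearMap.id ℝ (Euc n)) p := by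
    have h1 := (J.hasStrictFDerivAt (x := f p)).comp p hder
    have h2 := (hasStrictFDerivAt_id (𝕜 := ℝ) p).sub ((J.comp A).hasStrictFDerivAt (x := p))
    have h3 : HasStrictFDerivAt Φ (J.comp A + (ContinuousLinearMap.id ℝ (Euc n) - J.comp A)) p :=
      h1.add h2
    rwa [add_sub_cancel] at h3
  have hm := mul_le_addHaar_image_of_lt_det (volume : Measure (Euc n))
    (ContinuousLinearMap.id ℝ (Euc n)) (m := 1 / 2) (by
      have : (ContinuousLinearMap.id ℝ (Euc n)).det = 1 := by
        simp [ContinuousLinearMap.det]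
      rw [this]; simp)
  obtain ⟨δ, hδ, δpos⟩ := (hm.and self_mem_nhdsWithin).exists
  obtain ⟨s0, hs0, happ⟩ := hΦ.approximates_deriv_on_nhds (c := δ) (Or.inr δpos)
  have hcont : ContinuousAt Φ p := hΦ.continuousAt
  have hnb : {x | ‖Φ x‖ < ‖Φ p‖ + 1} ∈ 𝓝 p :=
    hcont.norm.eventually (gt_mem_nhds (by simp))
  obtain ⟨ρ, hρ, hball⟩ := Metric.mem_nhds_iff.1 (inter_mem hs0 hnb)
  obtain ⟨C, hC, hslab⟩ := volume_slab A hs (‖Φ p‖ + 1)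
  refine ⟨ρ, hρ, 2 * C, ENNReal.mul_ne_top (by simp) hC, fun s hs' => ?_⟩
  set T := {x : Euc n | x ∈ ball p ρ ∧ ‖f x‖ ≤ s}
  have h1 := hδ T Φ (happ.mono_set fun x hx => (hball hx.1).1)
  have h2 : Φ '' T ⊆ {y : Euc n | ‖A y‖ ≤ s ∧ ‖y‖ ≤ ‖Φ p‖ + 1} := by
    rintro _ ⟨x, hx, rfl⟩
    refine ⟨?_, (hball hx.1).2.le⟩
    have : A (Φ x) = f x := by simp [Φ, hJ']
    rw [this]; exact hx.2
  have h3 := h1.trans ((measure_mono h2).trans (hslab s hs'))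
  have h4 : volume T = 2 * (((1 / 2 : ℝ≥0) : ℝ≥0∞) * volume T) := by
    rw [← mul_assoc]
    have : (2 : ℝ≥0∞) * ((1 / 2 : ℝ≥0) : ℝ≥0∞) = 1 := by
      have : (2 : ℝ≥0∞) = ((2 : ℝ≥0) : ℝ≥0∞) := rfl
      rw [this, ← ENNReal.coe_mul]; simp
    rw [this, one_mul]
  rw [h4, mul_assoc]
  gcongr

/-- The tube of radius `r` around a compact submanifold of codimension `k` has volume
`O(r ^ k)`. -/
lemma volume_tube {n k : ℕ} {G : Set (Euc n)} (hG : IsCompact G) (hM : IsC2Submanifold k G) :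
    ∃ r₀ > 0, ∃ C : ℝ≥0∞, C ≠ ∞ ∧ ∀ r : ℝ, 0 ≤ r → r ≤ r₀ →
      volume (cthickening r G) ≤ C * ENNReal.ofReal (r ^ k) := by
  -- the statement for the part of the tube whose base points lie in `t`
  let P : Set (Euc n) → Prop := fun t => ∃ r₀ > 0, ∃ C : ℝ≥0∞, C ≠ ∞ ∧ ∀ r : ℝ, 0 ≤ r → r ≤ r₀ →
      volume {x | ∃ y ∈ t, dist x y ≤ r} ≤ C * ENNReal.ofReal (r ^ k)
  have hP : P G := by
    refine hG.induction_on (p := P) ?_ ?_ ?_ ?_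
    · exact ⟨1, one_pos, 0, by simp, by simp⟩
    · rintro s t hst ⟨r₀, h0, C, hC, h⟩
      refine ⟨r₀, h0, C, hC, fun r h1 h2 => (measure_mono ?_).trans (h r h1 h2)⟩
      rintro x ⟨y, hy, hxy⟩
      exact ⟨y, hst hy, hxy⟩
    · rintro s t ⟨r₀, h0, C, hC, h⟩ ⟨r₀', h0', C', hC', h'⟩
      refine ⟨min r₀ r₀', lt_min h0 h0', C + C', by simp [hC, hC'], fun r h1 h2 => ?_⟩
      have : {x : Euc n | ∃ y ∈ s ∪ t, dist x y ≤ r} ⊆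
          {x | ∃ y ∈ s, dist x y ≤ r} ∪ {x | ∃ y ∈ t, dist x y ≤ r} := by
        rintro x ⟨y, hy | hy, hxy⟩
        · exact Or.inl ⟨y, hy, hxy⟩
        · exact Or.inr ⟨y, hy, hxy⟩
      rw [add_mul]
      exact (measure_mono this).trans ((measure_union_le _ _).trans
        (add_le_add (h r h1 (h2.trans (min_le_left _ _)))
          (h' r h1 (h2.trans (min_le_right _ _)))))
    · intro p hp
      obtain ⟨U, f, hU, hpU, hf, hsurj, hlev⟩ := hM p hp
      obtain ⟨ρ, hρ, C, hC, hvol⟩ := volume_sublevel hf p (hsurj p hpU)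
      obtain ⟨L, t, ht, hLip⟩ := (hf.of_le (by norm_num : (1 : WithTop ℕ∞) ≤ 2)).contDiffAt
        (x := p) |>.exists_lipschitzOnWith
      obtain ⟨ε, hε, hball⟩ := Metric.mem_nhds_iff.1
        (inter_mem (inter_mem ht (hU.mem_nhds hpU)) (ball_mem_nhds p hρ))
      refine ⟨ball p (ε / 2) ∩ G, ?_, ε / 2, by positivity, C * ENNReal.ofReal ((L : ℝ) ^ k),
        ENNReal.mul_ne_top hC ENNReal.ofReal_ne_top, fun r h1 h2 => ?_⟩
      · exact inter_mem (mem_nhdsWithin_of_mem_nhds (ball_mem_nhds p (by positivity)))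
          self_mem_nhdsWithin
      · have hsub : {x : Euc n | ∃ y ∈ ball p (ε / 2) ∩ G, dist x y ≤ r} ⊆
            {x | x ∈ ball p ρ ∧ ‖f x‖ ≤ L * r} := by
          rintro x ⟨y, ⟨hy, hyG⟩, hxy⟩
          have hy' : y ∈ ball p ε := ball_subset_ball (by linarith) hy
          have hx' : x ∈ ball p ε := by
            rw [mem_ball] at hy ⊢
            linarith [dist_triangle x y p]
          have hfy : f y = 0 := by
            have : y ∈ G ∩ U := ⟨hyG, (hball hy').1.2⟩
            rw [hlev] at this
            exact this.2
          refine ⟨(hball hx').2, ?_⟩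
          have := hLip.dist_le_mul x (hball hx').1.1 y (hball hy').1.1
          rw [hfy, dist_zero_right] at this
          exact this.trans (by gcongr)
        refine (measure_mono hsub).trans ((hvol _ (by positivity)).trans ?_)
        rw [mul_pow, ENNReal.ofReal_mul (by positivity), mul_assoc]
  obtain ⟨r₀, h0, C, hC, h⟩ := hP
  refine ⟨r₀, h0, C, hC, fun r h1 h2 => (measure_mono ?_).trans (h r h1 h2)⟩
  intro x hx
  rw [hG.cthickening_eq_biUnion_closedBall h1] at hx
  obtain ⟨y, hy, hxy⟩ := mem_iUnion₂.1 hx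
  exact ⟨y, hy, hxy⟩

lemma isC2Submanifold_singleton {n : ℕ} (p : Euc n) : IsC2Submanifold n {p} := by
  intro q hq
  refine ⟨univ, fun x => x - p, isOpen_univ, mem_univ _, by fun_prop, fun x _ => ?_, ?_⟩
  · have : fderiv ℝ (fun x : Euc n => x - p) x = ContinuousLinearMap.id ℝ (Euc n) :=
      ((hasFDerivAt_id x).sub_const p).fderiv
    rw [this]; exact Function.surjective_id
  · ext x; simp [sub_eq_zero]

/-- The decomposition of `Γ k` into compact submanifolds for every `k`: the points of the last piece
are submanifolds of codimension `n`. -/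
lemma Setting.exists_pieces {n : ℕ} (S : Setting n) (k : Fin n) :
    ∃ (m : ℕ) (G : Fin m → Set (Euc n)), S.Γ k = ⋃ j, G j ∧
      ∀ j, IsCompact (G j) ∧ IsC2Submanifold ((k : ℕ) + 1) (G j) := by
  rcases Nat.lt_or_ge ((k : ℕ) + 1) n with h | h
  · obtain ⟨m, G, h1, h2, -⟩ := S.pieces k h
    exact ⟨m, G, h1, h2⟩
  · have hk : (k : ℕ) + 1 = n := le_antisymm k.2 h
    have hfin := S.points k hk
    obtain ⟨m, f, hf⟩ := hfin.fin_param
    refine ⟨m, fun j => {f j}, ?_, fun j => ⟨isCompact_singleton, ?_⟩⟩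
    · rw [← hf.2]; ext x; simp [eq_comm]
    · simpa only [hk] using isC2Submanifold_singleton (f j)

lemma Setting.isCompact_Γ {n : ℕ} (S : Setting n) (k : Fin n) : IsCompact (S.Γ k) := by
  obtain ⟨m, G, h1, h2⟩ := S.exists_pieces k
  rw [h1]
  exact isCompact_iUnion fun j => (h2 j).1

lemma exists_pos_le {m : ℕ} {r : Fin m → ℝ} (hr : ∀ j, 0 < r j) : ∃ r₀ > 0, ∀ j, r₀ ≤ r j := by
  have := (Filter.eventually_all (ι := Fin m) (l := 𝓝[>] (0 : ℝ)) (p := fun j x => x ≤ r j)).2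
    fun j => mem_nhdsWithin_of_mem_nhds (Iic_mem_nhds (hr j))
  obtain ⟨x, hx, hx'⟩ := (this.and self_mem_nhdsWithin).exists
  exact ⟨x, hx', hx⟩

lemma Setting.volume_tube {n : ℕ} (S : Setting n) (k : Fin n) :
    ∃ r₀ > 0, ∃ C : ℝ≥0∞, C ≠ ∞ ∧ ∀ r : ℝ, 0 ≤ r → r ≤ r₀ →
      volume (cthickening r (S.Γ k)) ≤ C * ENNReal.ofReal (r ^ ((k : ℕ) + 1)) := by
  obtain ⟨m, G, h1, h2⟩ := S.exists_pieces k
  choose r hr C hC h using fun j => _root_.volume_tube (h2 j).1 (h2 j).2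
  obtain ⟨r₀, hr₀, hle⟩ := exists_pos_le hr
  refine ⟨r₀, hr₀, ∑ j, C j, by simp [hC], fun t ht0 ht => ?_⟩
  have hsub : cthickening t (S.Γ k) ⊆ ⋃ j, cthickening t (G j) := by
    rw [(S.isCompact_Γ k).cthickening_eq_biUnion_closedBall ht0]
    intro x hx
    obtain ⟨y, hy, hxy⟩ := mem_iUnion₂.1 hx
    rw [h1] at hy
    obtain ⟨j, hj⟩ := mem_iUnion.1 hy
    exact mem_iUnion.2 ⟨j, mem_cthickening_of_dist_le x y t _ hj hxy⟩
  refine (measure_mono hsub).trans ((measure_iUnion_fintype_le _ _).trans ?_)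
  rw [Finset.sum_mul]
  exact Finset.sum_le_sum fun j _ => h j t ht0 (ht.trans (hle j))

/-! ### Cutoffs of small weighted energy -/

/-- A smooth transition from `0` to `1` inside the shell `r / 2 < dist(·, F) < r`, with slope
at most `8 / r`: a mollification of a piecewise linear function of the distance. -/
lemma exists_shell_cutoff {n : ℕ} (F : Set (Euc n)) {r : ℝ} (hr : 0 < r) :
    ∃ θ : Euc n → ℝ, ContDiff ℝ (⊤ : ℕ∞) θ ∧ (∀ x, 0 ≤ θ x) ∧ (∀ x, θ x ≤ 1) ∧
      (∀ x, r ≤ infDist x F → θ x = 1) ∧ (∀ x, infDist x F ≤ r / 2 → θ x = 0) ∧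
      (∀ x, ‖fderiv ℝ θ x‖ ≤ 8 / r) ∧
      (∀ x, ¬ (r / 2 < infDist x F ∧ infDist x F ≤ r) → fderiv ℝ θ x = 0) := by
  let f : Euc n → ℝ := fun x => min 1 (max 0 (8 * infDist x F / r - 6))
  let b : ContDiffBump (0 : Euc n) := ⟨r / 16, r / 8, by positivity, by linarith⟩
  let ρ := b.normed (volume : Measure (Euc n))
  have hdl : ∀ x y, infDist x F - infDist y F ≤ dist x y := fun x y => by
    have := infDist_le_infDist_add_dist (s := F) (x := x) (y := y)
    linarith
  have hfL : ∀ x y, |f x - f y| ≤ 8 / r * dist x y := fun x y => by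
    refine (abs_min_sub_min_le_max _ _ _ _).trans ?_
    rw [sub_self, abs_zero]
    refine max_le (by positivity) ((abs_max_sub_max_le_max _ _ _ _).trans ?_)
    rw [sub_self, abs_zero]
    refine max_le (by positivity) ?_
    rw [show 8 * infDist x F / r - 6 - (8 * infDist y F / r - 6)
      = 8 / r * (infDist x F - infDist y F) by ring, abs_mul, abs_of_pos (by positivity : 0 < 8 / r)]
    gcongr
    rw [abs_le]
    have := hdl y x
    rw [dist_comm] at this
    exact ⟨by linarith, hdl x y⟩
  have hfc : Continuous f := by
    have := continuous_infDist_pt F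
    fun_prop
  have hf0 : ∀ x, 0 ≤ f x := fun x => le_min zero_le_one (le_max_left _ _)
  have hf1 : ∀ x, f x ≤ 1 := fun x => min_le_left _ _
  let θ : Euc n → ℝ := ρ ⋆[ContinuousLinearMap.lsmul ℝ ℝ, volume] f
  have hθ : ∀ x, θ x = ∫ t, ρ t * f (x - t) := fun x => by simp [θ, convolution]
  have hρi : Integrable ρ :=
    b.continuous_normed.integrable_of_hasCompactSupport b.hasCompactSupport_normed
  have hi : ∀ x, Integrable (fun t => ρ t * f (x - t)) := fun x => by
    refine hρi.mul_bdd (c := 1) (by fun_prop) (Eventually.of_forall fun t => ?_)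
    rw [Real.norm_eq_abs, abs_of_nonneg (hf0 _)]
    exact hf1 _
  have hρ1 : ∫ t, ρ t = 1 := b.integral_normed
  have hsm : ContDiff ℝ (⊤ : ℕ∞) θ :=
    b.hasCompactSupport_normed.contDiff_convolution_left _ b.contDiff_normed hfc.locallyIntegrable
  have hθ1 : ∀ x, r ≤ infDist x F → θ x = 1 := fun x hx => by
    have hfx : ∀ y ∈ ball x b.rOut, f y = 1 := fun y hy => by
      have h1 : dist x y < r / 8 := by rw [dist_comm]; exact hy
      have h2 := hdl x y
      have h3 : 7 ≤ 8 * infDist y F / r := by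
        rw [le_div_iff₀ hr]; linarith
      exact min_eq_left (le_max_of_le_right (by linarith))
    have h4 := hfx x (mem_ball_self b.rOut_pos)
    rw [← h4]
    exact b.normed_convolution_eq_right fun y hy => by rw [h4, hfx y hy]
  have hθ0 : ∀ x, infDist x F ≤ 5 / 8 * r → θ x = 0 := fun x hx => by
    have hfx : ∀ y ∈ ball x b.rOut, f y = 0 := fun y hy => by
      have h1 : dist y x < r / 8 := hy
      have h2 := hdl y x
      have h3 : 8 * infDist y F / r ≤ 6 := by
        rw [div_le_iff₀ hr]; linarith
      simp only [f]
      rw [max_eq_left (by linarith)]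
      simp
    have h4 := hfx x (mem_ball_self b.rOut_pos)
    rw [← h4]
    exact b.normed_convolution_eq_right fun y hy => by rw [h4, hfx y hy]
  refine ⟨θ, hsm, fun x => ?_, fun x => ?_, hθ1, fun x hx => hθ0 x (by linarith), fun x => ?_,
    fun x hx => ?_⟩
  · rw [hθ]
    exact integral_nonneg fun t => mul_nonneg (b.nonneg_normed t) (hf0 _)
  · rw [hθ, ← hρ1]
    exact integral_mono (hi x) hρi fun t => mul_le_of_le_one_right (b.nonneg_normed t) (hf1 _)
  · refine norm_fderiv_le_of_lipschitz (C := ⟨8 / r, by positivity⟩) ℝ ?_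
    refine LipschitzWith.of_dist_le_mul fun x y => ?_
    rw [Real.dist_eq, hθ, hθ, ← integral_sub (hi x) (hi y)]
    have hb : ∀ t, ‖ρ t * f (x - t) - ρ t * f (y - t)‖ ≤ ρ t * (8 / r * dist x y) := fun t => by
      rw [← mul_sub, norm_mul, Real.norm_of_nonneg (b.nonneg_normed t), Real.norm_eq_abs]
      refine mul_le_mul_of_nonneg_left ?_ (b.nonneg_normed t)
      have := hfL (x - t) (y - t)
      rwa [dist_sub_right] at this
    refine (norm_integral_le_of_norm_le (hρi.mul_const _) (Eventually.of_forall hb)).trans ?_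
    rw [integral_mul_const, hρ1, one_mul]
    rfl
  · have hc := continuous_infDist_pt F
    have hcase : infDist x F < 5 / 8 * r ∨ r < infDist x F := by
      by_contra h
      push Not at h
      exact hx ⟨by linarith, h.2⟩
    rcases hcase with h | h
    · have : θ =ᶠ[𝓝 x] fun _ => (0 : ℝ) := by
        filter_upwards [(isOpen_lt hc continuous_const).mem_nhds h] with y hy
        exact hθ0 y (le_of_lt hy)
      rw [this.fderiv_eq]; simp
    · have : θ =ᶠ[𝓝 x] fun _ => (1 : ℝ) := by
        filter_upwards [(isOpen_lt continuous_const hc).mem_nhds h] with y hy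
        exact hθ1 y (le_of_lt hy)
      rw [this.fderiv_eq]; simp

/-- If `w` has mass at most `C r ^ 2` on each shell `r / 2 < dist(·, Ωᶜ) ≤ r`, then averaging
the transitions over `N` dyadic shells gives cutoffs whose `w`-weighted Dirichlet energy is
`O(1 / N)`. -/
lemma exists_cutoff {n : ℕ} {Ω : Set (Euc n)} (hΩ : IsOpen Ω) (hb : Bornology.IsBounded Ω)
    (w : Euc n → ℝ≥0∞) (hwm : AEMeasurable w (volume.restrict Ω))
    {r₁ : ℝ} (hr₁ : 0 < r₁) {C : ℝ≥0∞} (hC : C ≠ ∞)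
    (hw : ∀ r, 0 < r → r ≤ r₁ →
      ∫⁻ x in {x ∈ Ω | r / 2 < infDist x Ωᶜ ∧ infDist x Ωᶜ ≤ r}, w x ≤ C * ENNReal.ofReal (r ^ 2))
    {δ : ℝ} (hδ : 0 < δ) :
    ∃ η : Euc n → ℝ, IsTest Ω η ∧ (∀ x, 0 ≤ η x) ∧ (∀ x, η x ≤ 1) ∧
      (∀ x, δ ≤ infDist x Ωᶜ → η x = 1) ∧
      ∫⁻ x in Ω, ENNReal.ofReal (‖fderiv ℝ η x‖ ^ 2) * w x ≤ ENNReal.ofReal δ := by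
  choose θ hsm h0 h1 hone hzero hL hfd using
    fun j : ℕ => exists_shell_cutoff (n := n) Ωᶜ (r := (1 / 2 : ℝ) ^ j) (by positivity)
  have hpow : Tendsto (fun N : ℕ => (1 / 2 : ℝ) ^ N) atTop (𝓝 0) :=
    tendsto_pow_atTop_nhds_zero_of_lt_one (by norm_num) (by norm_num)
  have hdiv : Tendsto (fun N : ℕ => (64 * C) * ENNReal.ofReal (1 / (N : ℝ))) atTop (𝓝 0) := by
    have : Tendsto (fun N : ℕ => ENNReal.ofReal (1 / (N : ℝ))) atTop (𝓝 0) := by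
      simpa using ENNReal.tendsto_ofReal (tendsto_one_div_atTop_nhds_zero_nat (𝕜 := ℝ))
    simpa using ENNReal.Tendsto.const_mul this (Or.inr (ENNReal.mul_ne_top (by simp) hC))
  obtain ⟨N, ⟨⟨hN1, hN2⟩, hN3⟩, hN4⟩ :=
    (((hpow.eventually (Iio_mem_nhds hr₁)).and (hpow.eventually (Iio_mem_nhds hδ))).and
      (hdiv.eventually (Iio_mem_nhds (ENNReal.ofReal_pos.2 hδ))) |>.and (eventually_ge_atTop 1)).exists
  have hNpos : (0 : ℝ) < N := by exact_mod_cast hN4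
  let I := Finset.Ico N (2 * N)
  have hI : (I.card : ℝ) = N := by simp [I]; ring_nf; simp [mul_two]
  let η : Euc n → ℝ := fun x => (1 / (N : ℝ)) * ∑ j ∈ I, θ j x
  have hηs : ContDiff ℝ (⊤ : ℕ∞) η := contDiff_const.mul (ContDiff.sum fun j _ => hsm j)
  have hdc := continuous_infDist_pt (Ωᶜ : Set (Euc n))
  have hmono : ∀ {i j : ℕ}, i ≤ j → (1 / 2 : ℝ) ^ j ≤ (1 / 2 : ℝ) ^ i := fun h =>
    pow_le_pow_of_le_one (by norm_num) (by norm_num) h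
  have hsupp : tsupport η ⊆ {x | (1 / 2 : ℝ) ^ (2 * N) / 2 ≤ infDist x Ωᶜ} := by
    refine closure_minimal ?_ (isClosed_le continuous_const hdc)
    intro x hx
    by_contra hlt
    refine hx ?_
    simp only [mem_ofPred_eq, not_le] at hlt
    simp only [η]
    rw [Finset.sum_eq_zero, mul_zero]
    intro j hj
    refine hzero j x (hlt.le.trans ?_)
    have := hmono (Finset.mem_Ico.1 hj).2.le
    linarith
  have hsub : {x | (1 / 2 : ℝ) ^ (2 * N) / 2 ≤ infDist x Ωᶜ} ⊆ Ω := by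
    intro x hx
    by_contra h
    have h0 : infDist x Ωᶜ = 0 := infDist_zero_of_mem h
    have : (0 : ℝ) < (1 / 2 : ℝ) ^ (2 * N) / 2 := by positivity
    simp only [mem_ofPred_eq, h0] at hx
    linarith
  have hsum1 : ∀ x, ∑ j ∈ I, θ j x ≤ N := fun x => by
    rw [← hI]
    have := Finset.sum_le_card_nsmul I (fun j => θ j x) 1 fun j _ => h1 j x
    simpa using this
  refine ⟨η, ⟨hηs, ?_, hsupp.trans hsub⟩, fun x => ?_, fun x => ?_, fun x hx => ?_, ?_⟩
  · exact Metric.isCompact_of_isClosed_isBounded (isClosed_tsupport _)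
      (hb.subset (hsupp.trans hsub))
  · exact mul_nonneg (by positivity) (Finset.sum_nonneg fun j _ => h0 j x)
  · simp only [η]
    rw [one_div, inv_mul_le_iff₀ hNpos, mul_one]
    exact hsum1 x
  · simp only [η]
    rw [Finset.sum_congr rfl (g := fun _ => (1 : ℝ)) fun j hj => hone j x
      (((hmono (Finset.mem_Ico.1 hj).1).trans hN2.le).trans hx)]
    rw [Finset.sum_const, nsmul_eq_mul, mul_one, hI]
    field_simp
  · let A : ℕ → Set (Euc n) := fun j =>
      {x ∈ Ω | (1 / 2 : ℝ) ^ j / 2 < infDist x Ωᶜ ∧ infDist x Ωᶜ ≤ (1 / 2 : ℝ) ^ j}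
    have hAm : ∀ j, MeasurableSet (A j) := fun j =>
      hΩ.measurableSet.inter ((isOpen_lt continuous_const hdc).measurableSet.inter
        (isClosed_le hdc continuous_const).measurableSet)
    have hη' : ∀ x, fderiv ℝ η x = (1 / (N : ℝ)) • ∑ j ∈ I, fderiv ℝ (θ j) x := fun x => by
      have hd : ∀ j ∈ I, HasFDerivAt (θ j) (fderiv ℝ (θ j) x) x := fun j _ =>
        ((hsm j).differentiable (by simp) x).hasFDerivAt
      have h2 : HasFDerivAt η ((1 / (N : ℝ)) • ∑ j ∈ I, fderiv ℝ (θ j) x) x := by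
        exact (HasFDerivAt.fun_sum hd).const_mul (1 / (N : ℝ))
      exact h2.fderiv
    -- the shells are disjoint, so at most one term of the sum is nonzero
    have hpt : ∀ x ∈ Ω, ENNReal.ofReal (‖fderiv ℝ η x‖ ^ 2) * w x ≤
        ∑ j ∈ I, (A j).indicator (fun x => ENNReal.ofReal ((1 / N * (8 / (1 / 2 : ℝ) ^ j)) ^ 2)
          * w x) x := by
      intro x hx
      by_cases hex : ∃ j ∈ I, x ∈ A j
      · obtain ⟨j, hj, hxj⟩ := hex
        refine le_trans ?_ (Finset.single_le_sum (fun _ _ => zero_le) hj)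
        rw [indicator_of_mem hxj]
        gcongr
        rw [hη', Finset.sum_eq_single j]
        · rw [norm_smul, Real.norm_of_nonneg (by positivity)]
          gcongr
          exact hL j x
        · intro i _ hij
          refine hfd i x fun hi => ?_
          rcases lt_or_gt_of_ne hij with h | h
          · have := hmono (Nat.succ_le_of_lt h)
            rw [pow_succ] at this
            have := hxj.2.2
            linarith [hi.1]
          · have := hmono (Nat.succ_le_of_lt h)
            rw [pow_succ] at this
            have := hxj.2.1
            linarith [hi.2]
        · intro h; exact absurd hj h
      · have : fderiv ℝ η x = 0 := by
          rw [hη', Finset.sum_eq_zero, smul_zero]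
          intro j hj
          exact hfd j x fun h => hex ⟨j, hj, hx, h⟩
        simp [this]
    have hterm : ∀ j ∈ I, ∫⁻ x in Ω, (A j).indicator
        (fun x => ENNReal.ofReal ((1 / N * (8 / (1 / 2 : ℝ) ^ j)) ^ 2) * w x) x ≤
        64 * C * ENNReal.ofReal (1 / (N : ℝ) ^ 2) := by
      intro j hj
      refine (setLIntegral_le_lintegral _ _).trans ?_
      rw [lintegral_indicator (hAm j), lintegral_const_mul' _ _ ENNReal.ofReal_ne_top]
      refine (mul_le_mul_right (hw _ (by positivity)
        ((hmono (Finset.mem_Ico.1 hj).1).trans hN1.le)) _).trans (le_of_eq ?_)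
      rw [mul_comm C, ← mul_assoc, ← ENNReal.ofReal_mul (by positivity),
        show (1 / (N : ℝ) * (8 / (1 / 2 : ℝ) ^ j)) ^ 2 * ((1 / 2 : ℝ) ^ j) ^ 2
          = 64 * (1 / (N : ℝ) ^ 2) by field_simp; norm_num,
        ENNReal.ofReal_mul (by norm_num)]
      simp only [ENNReal.ofReal_ofNat]
      ring
    calc ∫⁻ x in Ω, ENNReal.ofReal (‖fderiv ℝ η x‖ ^ 2) * w x
        ≤ ∫⁻ x in Ω, ∑ j ∈ I, (A j).indicator
          (fun x => ENNReal.ofReal ((1 / N * (8 / (1 / 2 : ℝ) ^ j)) ^ 2) * w x) x :=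
          setLIntegral_mono' hΩ.measurableSet hpt
      _ ≤ ∑ j ∈ I, 64 * C * ENNReal.ofReal (1 / (N : ℝ) ^ 2) := by
          rw [lintegral_finsetSum' _ fun j _ => (hwm.const_mul _).indicator (hAm j)]
          exact Finset.sum_le_sum hterm
      _ = 64 * C * ENNReal.ofReal (1 / (N : ℝ)) := by
          rw [Finset.sum_const, nsmul_eq_mul, ← ENNReal.ofReal_natCast, hI, mul_left_comm,
            ← ENNReal.ofReal_mul hNpos.le]
          congr 2
          field_simp
      _ ≤ _ := hN3.le

/-! ### The weight near the boundary -/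

/-- Near `Γ k` the distances to the other pieces stay in a compact part of `(0, ∞)`, so that
`φ ^ 2 = O(d_k ^ (2 α_k))`, and `2 α_k ≥ 2 - codim Γ k`. -/
lemma weight_near_piece {n : ℕ} (S : Setting n)
    (α : Fin n → ℝ) (hα : ∀ k : Fin n, -((((k : ℕ) : ℝ) + 1) - 2) / 2 ≤ α k)
    (φ : Euc n → ℝ) (c₁ c₂ : ℝ) (hc₁ : 0 < c₁) (hc₂ : 0 < c₂)
    (hbound : ∀ x ∈ S.Ω,
      c₁ * ∏ k, dΓ S k x ^ α k ≤ φ x ∧ φ x ≤ c₂ * ∏ k, dΓ S k x ^ α k)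
    (k : Fin n) (hk : (S.Γ k).Nonempty) :
    ∃ ρ > 0, ∃ K : ℝ, 0 ≤ K ∧ ∀ x ∈ S.Ω, 0 < dΓ S k x → dΓ S k x ≤ ρ →
      φ x ^ 2 * dΓ S k x ^ ((k : ℕ) + 1) ≤ K * dΓ S k x ^ 2 := by
  have hd0 : ∀ l x, 0 ≤ dΓ S l x := fun l x => infDist_nonneg
  have hfac : ∀ l : Fin n, ∃ ρ > 0, ∃ B : ℝ, 0 ≤ B ∧ (l ≠ k → ∀ x ∈ S.Ω, dΓ S k x ≤ ρ →
      dΓ S l x ^ α l ≤ B) := by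
    intro l
    by_cases hlk : l = k
    · exact ⟨1, one_pos, 1, zero_le_one, fun h => absurd hlk h⟩
    rcases (S.Γ l).eq_empty_or_nonempty with he | hne
    · refine ⟨1, one_pos, 1, zero_le_one, fun _ x _ _ => ?_⟩
      have : dΓ S l x = 0 := by simp [dΓ, he]
      rw [this]
      exact Real.zero_rpow_le_one _
    · obtain ⟨y₀, hy₀, hmin⟩ := (S.isCompact_Γ k).exists_isMinOn hk
        (continuous_infDist_pt (S.Γ l)).continuousOn
      have hδ : 0 < infDist y₀ (S.Γ l) :=
        ((S.isCompact_Γ l).isClosed.notMem_iff_infDist_pos hne).1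
          (disjoint_left.1 (S.disjoint k l (Ne.symm hlk)) hy₀)
      set δ := infDist y₀ (S.Γ l) with hδd
      obtain ⟨D, hD⟩ := (S.bounded.isCompact_closure).exists_bound_of_continuousOn
        (continuous_infDist_pt (S.Γ l)).continuousOn
      obtain ⟨B, hB⟩ := (isCompact_Icc (a := δ / 2) (b := D)).exists_bound_of_continuousOn
        (f := fun t : ℝ => t ^ α l) (fun t ht => (Real.continuousAt_rpow_const t (α l)
          (Or.inl (by have := ht.1; intro h; rw [h] at this; linarith))).continuousWithinAt)
      refine ⟨δ / 2, by positivity, max B 0, le_max_right _ _, fun _ x hx hxk => ?_⟩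
      obtain ⟨y, hy, hxy⟩ := (S.isCompact_Γ k).exists_infDist_eq_dist hk x
      have h1 : δ ≤ infDist y (S.Γ l) := hmin hy
      have h2 : infDist y (S.Γ l) ≤ infDist x (S.Γ l) + dist y x := infDist_le_infDist_add_dist
      have h3 : dist y x ≤ δ / 2 := by rw [dist_comm, ← hxy]; exact hxk
      have h4 := hD x (subset_closure hx)
      refine le_max_of_le_left ((le_abs_self _).trans (hB _ ⟨?_, (le_abs_self _).trans h4⟩))
      simp only [dΓ]; linarith
  choose ρ hρ B hB0 hB using hfac
  obtain ⟨ρ₀, hρ₀, hρle⟩ := exists_pos_le hρ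
  refine ⟨min ρ₀ 1, lt_min hρ₀ one_pos, (c₂ * ∏ l ∈ Finset.univ.erase k, B l) ^ 2, sq_nonneg _,
    fun x hx hpos hle => ?_⟩
  set d := dΓ S k x with hd
  have hφ0 : 0 ≤ φ x := le_trans (mul_nonneg hc₁.le (Finset.prod_nonneg fun l _ =>
    Real.rpow_nonneg (hd0 l x) _)) (hbound x hx).1
  have hP : ∏ l ∈ Finset.univ.erase k, dΓ S l x ^ α l ≤ ∏ l ∈ Finset.univ.erase k, B l :=
    Finset.prod_le_prod (fun l _ => Real.rpow_nonneg (hd0 l x) _) fun l hl =>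
      hB l (Finset.ne_of_mem_erase hl) x hx ((hle.trans (min_le_left _ _)).trans (hρle l))
  have hP0 : 0 ≤ ∏ l ∈ Finset.univ.erase k, B l := Finset.prod_nonneg fun l _ => hB0 l
  have hdα : d ^ α k ≤ d ^ (-((((k : ℕ) : ℝ) + 1) - 2) / 2) :=
    Real.rpow_le_rpow_of_exponent_ge hpos (hle.trans (min_le_right _ _)) (hα k)
  have hφ : φ x ≤ (c₂ * ∏ l ∈ Finset.univ.erase k, B l) *
      d ^ (-((((k : ℕ) : ℝ) + 1) - 2) / 2) := by
    refine (hbound x hx).2.trans ?_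
    rw [← Finset.mul_prod_erase Finset.univ _ (Finset.mem_univ k), mul_assoc]
    refine mul_le_mul_of_nonneg_left ?_ hc₂.le
    rw [mul_comm (∏ l ∈ Finset.univ.erase k, B l)]
    exact mul_le_mul hdα hP (Finset.prod_nonneg fun l _ => Real.rpow_nonneg (hd0 l x) _)
      (Real.rpow_nonneg hpos.le _)
  have hpow : (d ^ (-((((k : ℕ) : ℝ) + 1) - 2) / 2)) ^ 2 * d ^ ((k : ℕ) + 1) = d ^ 2 := by
    rw [← Real.rpow_natCast, ← Real.rpow_natCast, ← Real.rpow_natCast, ← Real.rpow_mul hpos.le,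
      ← Real.rpow_add hpos]
    congr 1
    push_cast
    ring
  calc φ x ^ 2 * d ^ ((k : ℕ) + 1)
      ≤ ((c₂ * ∏ l ∈ Finset.univ.erase k, B l) * d ^ (-((((k : ℕ) : ℝ) + 1) - 2) / 2)) ^ 2
        * d ^ ((k : ℕ) + 1) := by gcongr
    _ = _ := by rw [mul_pow, mul_assoc, hpow]

lemma Setting.ne_univ {n : ℕ} (hn : 2 ≤ n) (S : Setting n) : S.Ω ≠ univ := fun hu => by
  have : Nonempty (Fin n) := ⟨⟨0, by omega⟩⟩
  have := S.bounded
  rw [hu] at this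
  exact NormedSpace.unbounded_univ ℝ (Euc n) this

/-- The weight `φ ^ 2` has mass `O(r ^ 2)` on the shell `r / 2 < dist(·, Ωᶜ) ≤ r`: this is where
the condition on the exponents enters. -/
lemma shell_mass {n : ℕ} (hn : 2 ≤ n) (S : Setting n)
    (α : Fin n → ℝ) (hα : ∀ k : Fin n, -((((k : ℕ) : ℝ) + 1) - 2) / 2 ≤ α k)
    (φ : Euc n → ℝ) (c₁ c₂ : ℝ) (hc₁ : 0 < c₁) (hc₂ : 0 < c₂)
    (hbound : ∀ x ∈ S.Ω,
      c₁ * ∏ k, dΓ S k x ^ α k ≤ φ x ∧ φ x ≤ c₂ * ∏ k, dΓ S k x ^ α k) :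
    ∃ r₁ > 0, ∃ C : ℝ≥0∞, C ≠ ∞ ∧ ∀ r, 0 < r → r ≤ r₁ →
      ∫⁻ x in {x ∈ S.Ω | r / 2 < infDist x S.Ωᶜ ∧ infDist x S.Ωᶜ ≤ r},
        ENNReal.ofReal (φ x ^ 2) ≤ C * ENNReal.ofReal (r ^ 2) := by
  have hpiece : ∀ k : Fin n, ∃ r₁ > 0, ∃ C : ℝ≥0∞, C ≠ ∞ ∧ ∀ r, 0 < r → r ≤ r₁ →
      ∫⁻ x in {x ∈ S.Ω | r / 2 < dΓ S k x ∧ dΓ S k x ≤ r},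
        ENNReal.ofReal (φ x ^ 2) ≤ C * ENNReal.ofReal (r ^ 2) := by
    intro k
    rcases (S.Γ k).eq_empty_or_nonempty with he | hk
    · refine ⟨1, one_pos, 0, by simp, fun r hr _ => ?_⟩
      have : {x ∈ S.Ω | r / 2 < dΓ S k x ∧ dΓ S k x ≤ r} = ∅ := by
        ext x
        simp only [dΓ, he, infDist_empty, mem_ofPred_eq, mem_empty_iff_false, iff_false]
        intro h
        linarith [h.2.1]
      simp [this]
    · obtain ⟨ρ, hρ, K, hK, hKφ⟩ := weight_near_piece S α hα φ c₁ c₂ hc₁ hc₂ hbound k hk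
      obtain ⟨r₀, hr₀, C, hC, hvol⟩ := S.volume_tube k
      refine ⟨min ρ r₀, lt_min hρ hr₀, C * ENNReal.ofReal (K * 2 ^ ((k : ℕ) + 1)),
        ENNReal.mul_ne_top hC ENNReal.ofReal_ne_top, fun r hr hrle => ?_⟩
      have hdc : Continuous (dΓ S k) := continuous_infDist_pt _
      have hm : MeasurableSet {x ∈ S.Ω | r / 2 < dΓ S k x ∧ dΓ S k x ≤ r} :=
        S.isOpen.measurableSet.inter ((isOpen_lt continuous_const hdc).measurableSet.inter
          (isClosed_le hdc continuous_const).measurableSet)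
      have hsub : {x ∈ S.Ω | r / 2 < dΓ S k x ∧ dΓ S k x ≤ r} ⊆ cthickening r (S.Γ k) :=
        fun x hx => by
          obtain ⟨y, hy, hxy⟩ := (S.isCompact_Γ k).exists_infDist_eq_dist hk x
          exact mem_cthickening_of_dist_le x y r _ hy (hxy ▸ hx.2.2)
      have hpt : ∀ x ∈ {x ∈ S.Ω | r / 2 < dΓ S k x ∧ dΓ S k x ≤ r}, ENNReal.ofReal (φ x ^ 2) ≤
          ENNReal.ofReal (K * r ^ 2 / (r / 2) ^ ((k : ℕ) + 1)) := fun x hx => by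
        have hpos : 0 < dΓ S k x := lt_trans (by positivity) hx.2.1
        refine ENNReal.ofReal_le_ofReal ?_
        rw [le_div_iff₀ (by positivity)]
        calc φ x ^ 2 * (r / 2) ^ ((k : ℕ) + 1) ≤ φ x ^ 2 * dΓ S k x ^ ((k : ℕ) + 1) := by
              gcongr; exact hx.2.1.le
          _ ≤ K * dΓ S k x ^ 2 :=
              hKφ x hx.1 hpos (hx.2.2.trans (hrle.trans (min_le_left _ _)))
          _ ≤ K * r ^ 2 := by gcongr; exact hx.2.2
      refine (setLIntegral_mono' hm hpt).trans ?_
      rw [setLIntegral_const]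
      refine (mul_le_mul_right ((measure_mono hsub).trans
        (hvol r hr.le (hrle.trans (min_le_right _ _)))) _).trans (le_of_eq ?_)
      rw [mul_left_comm, ← ENNReal.ofReal_mul (by positivity), mul_assoc,
        ← ENNReal.ofReal_mul (by positivity)]
      congr 2
      rw [div_pow]
      field_simp
  choose r₁ hr₁ C hC h using hpiece
  obtain ⟨r₀, hr₀, hr₀le⟩ := exists_pos_le hr₁
  refine ⟨r₀, hr₀, ∑ k, C k, by simpa [ENNReal.sum_eq_top] using hC, fun r hr hrle => ?_⟩
  have hsub : {x ∈ S.Ω | r / 2 < infDist x S.Ωᶜ ∧ infDist x S.Ωᶜ ≤ r} ⊆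
      ⋃ k, {x ∈ S.Ω | r / 2 < dΓ S k x ∧ dΓ S k x ≤ r} := by
    rintro x ⟨hxΩ, hx⟩
    obtain ⟨y, hy, hxy⟩ := exists_mem_frontier_infDist_compl_eq_dist hxΩ (Setting.ne_univ hn S)
    have hyΓ := hy
    rw [S.boundary_eq] at hyΓ
    obtain ⟨k, hk⟩ := mem_iUnion.1 hyΓ
    have hsubk : S.Γ k ⊆ S.Ωᶜ := fun z hz hzΩ => by
      have hzf : z ∈ frontier S.Ω := S.boundary_eq ▸ mem_iUnion_of_mem k hz
      rw [S.isOpen.frontier_eq] at hzf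
      exact hzf.2 hzΩ
    have heq : dΓ S k x = infDist x S.Ωᶜ :=
      le_antisymm (hxy ▸ infDist_le_dist_of_mem hk) (infDist_le_infDist_of_subset hsubk ⟨y, hk⟩)
    exact mem_iUnion.2 ⟨k, hxΩ, heq ▸ hx⟩
  refine (lintegral_mono_set hsub).trans ((lintegral_iUnion_le _ _).trans ?_)
  rw [tsum_fintype, Finset.sum_mul]
  exact Finset.sum_le_sum fun k _ => h k r hr (hrle.trans (hr₀le k))

/-! ### The weight on compact sets, and measurability -/

lemma dΓ_pos {n : ℕ} (S : Setting n) {k : Fin n} (hk : (S.Γ k).Nonempty) {x : Euc n}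
    (hx : x ∈ S.Ω) : 0 < dΓ S k x := by
  refine ((S.isCompact_Γ k).isClosed.notMem_iff_infDist_pos hk).1 fun hxk => ?_
  have hxf : x ∈ frontier S.Ω := S.boundary_eq ▸ mem_iUnion_of_mem k hxk
  rw [S.isOpen.frontier_eq] at hxf
  exact hxf.2 hx

/-- On compact subsets of `Ω` the weight lies between positive constants, unless an empty piece
makes it vanish. -/
lemma weight_compact {n : ℕ} (S : Setting n) (α : Fin n → ℝ)
    (φ : Euc n → ℝ) (c₁ c₂ : ℝ) (hc₁ : 0 < c₁)
    (hbound : ∀ x ∈ S.Ω,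
      c₁ * ∏ k, dΓ S k x ^ α k ≤ φ x ∧ φ x ≤ c₂ * ∏ k, dΓ S k x ^ α k)
    (hne : ∀ k, (S.Γ k).Nonempty ∨ α k = 0) {K : Set (Euc n)} (hK : IsCompact K)
    (hKΩ : K ⊆ S.Ω) : ∃ a > 0, ∃ b, ∀ x ∈ K, a ≤ φ x ∧ φ x ≤ b := by
  have hpos : ∀ x ∈ S.Ω, 0 < ∏ k, dΓ S k x ^ α k := fun x hx => by
    refine Finset.prod_pos fun k _ => ?_
    rcases hne k with h | h
    · exact Real.rpow_pos_of_pos (dΓ_pos S h hx) _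
    · simp [h]
  have hcont : ContinuousOn (fun x => ∏ k, dΓ S k x ^ α k) K := by
    refine continuousOn_finsetProd _ fun k _ => ?_
    rcases hne k with h | h
    · exact ContinuousOn.rpow_const (continuous_infDist_pt _).continuousOn
        fun x hx => Or.inl (dΓ_pos S h (hKΩ hx)).ne'
    · simp only [h, Real.rpow_zero]
      exact continuousOn_const
  rcases K.eq_empty_or_nonempty with rfl | hKne
  · exact ⟨1, one_pos, 1, fun x hx => hx.elim⟩
  obtain ⟨y, hy, hymin⟩ := hK.exists_isMinOn hKne hcont
  obtain ⟨z, hz, hzmax⟩ := hK.exists_isMaxOn hKne (hcont.const_smul c₂)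
  refine ⟨c₁ * ∏ k, dΓ S k y ^ α k, mul_pos hc₁ (hpos y (hKΩ hy)), c₂ * ∏ k, dΓ S k z ^ α k,
    fun x hx => ⟨?_, ?_⟩⟩
  · exact (mul_le_mul_of_nonneg_left (hymin hx) hc₁.le).trans (hbound x (hKΩ hx)).1
  · exact (hbound x (hKΩ hx)).2.trans (hzmax hx)

/-- A test function with values in `[0, 1]`, equal to `1` at distance at least `r` from `Ωᶜ`. -/
lemma exists_test_one {n : ℕ} {Ω : Set (Euc n)} (hb : Bornology.IsBounded Ω) {r : ℝ}
    (hr : 0 < r) : ∃ χ : Euc n → ℝ, IsTest Ω χ ∧ (∀ x, 0 ≤ χ x) ∧ (∀ x, χ x ≤ 1) ∧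
      ∀ x, r ≤ infDist x Ωᶜ → χ x = 1 := by
  obtain ⟨θ, hs, h0, h1, hone, hz, -, -⟩ := exists_shell_cutoff (n := n) Ωᶜ hr
  have hsupp : tsupport θ ⊆ {x | r / 2 ≤ infDist x Ωᶜ} := by
    refine closure_minimal ?_ (isClosed_le continuous_const (continuous_infDist_pt _))
    intro x hx
    by_contra hlt
    simp only [mem_ofPred_eq, not_le] at hlt
    exact hx (hz x hlt.le)
  have hsub : {x | r / 2 ≤ infDist x Ωᶜ} ⊆ Ω := by
    intro x hx
    by_contra h
    have h0 : infDist x Ωᶜ = 0 := infDist_zero_of_mem h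
    simp only [mem_ofPred_eq, h0] at hx
    linarith
  exact ⟨θ, ⟨hs, Metric.isCompact_of_isClosed_isBounded (isClosed_tsupport _)
    (hb.subset (hsupp.trans hsub)), hsupp.trans hsub⟩, h0, h1, hone⟩

lemma IsTest.neg {n : ℕ} {Ω : Set (Euc n)} {u : Euc n → ℝ} (h : IsTest Ω u) :
    IsTest Ω (fun x => -u x) := by
  simpa using isTest_mul_left h (a := fun _ => -1) contDiff_const

lemma gradient_neg' {n : ℕ} (u : Euc n → ℝ) (x : Euc n) (i : Fin n) :
    gradient (fun x => -u x) x i = -gradient u x i := by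
  simp [grad_apply, fderiv_fun_neg]

/-- Testing the measurability of the integrand against `± χ` and `± x_i χ`, where `χ = 1` locally,
separates `φ ^ 2`, `v φ ^ 2` and `g_i φ ^ 2`. -/
lemma aemeasurable_data {n : ℕ} {Ω : Set (Euc n)} (hΩ : IsOpen Ω) (hb : Bornology.IsBounded Ω)
    (hc : (Ωᶜ).Nonempty) (φ v : Euc n → ℝ) (g : Euc n → Fin n → ℝ) (hφ : ∀ x ∈ Ω, 0 < φ x)
    (hF : ∀ ψ, IsTest Ω ψ → AEStronglyMeasurable (fun x =>
      ((v x - ψ x) ^ 2 + ∑ i, (g x i - gradient ψ x i) ^ 2) * φ x ^ 2) (volume.restrict Ω)) :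
    AEMeasurable φ (volume.restrict Ω) ∧ AEMeasurable v (volume.restrict Ω) ∧
      ∀ i, AEMeasurable (fun x => g x i) (volume.restrict Ω) := by
  let U : ℕ → Set (Euc n) := fun m => {x | 1 / ((m : ℝ) + 1) < infDist x Ωᶜ}
  have hUo : ∀ m, IsOpen (U m) := fun m => isOpen_lt continuous_const (continuous_infDist_pt _)
  have hUΩ : ∀ m, U m ⊆ Ω := fun m x hx => by
    by_contra h
    have h0 : infDist x Ωᶜ = 0 := infDist_zero_of_mem h
    have : (0 : ℝ) < 1 / ((m : ℝ) + 1) := by positivity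
    simp only [U, mem_ofPred_eq, h0] at hx
    linarith
  have hUn : Ω = ⋃ m, U m := by
    refine subset_antisymm (fun x hx => ?_) (iUnion_subset hUΩ)
    have hpos : 0 < infDist x Ωᶜ :=
      (hΩ.isClosed_compl.notMem_iff_infDist_pos hc).1 fun h => h hx
    obtain ⟨m, hm⟩ := exists_nat_one_div_lt hpos
    exact mem_iUnion.2 ⟨m, hm⟩
  suffices h : ∀ m, AEMeasurable φ (volume.restrict (U m)) ∧ AEMeasurable v (volume.restrict (U m))
      ∧ ∀ i, AEMeasurable (fun x => g x i) (volume.restrict (U m)) by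
    rw [hUn]
    simp only [aemeasurable_iUnion_iff]
    exact ⟨fun m => (h m).1, fun m => (h m).2.1, fun i m => (h m).2.2 i⟩
  intro m
  obtain ⟨χ, hχ, -, -, hone⟩ := exists_test_one hb (Nat.one_div_pos_of_nat (n := m) (α := ℝ))
  have hF' : ∀ ψ, IsTest Ω ψ → AEMeasurable (fun x =>
      ((v x - ψ x) ^ 2 + ∑ i, (g x i - gradient ψ x i) ^ 2) * φ x ^ 2)
      (volume.restrict (U m)) := fun ψ hψ =>
    (hF ψ hψ).aemeasurable.mono_measure (Measure.restrict_mono (hUΩ m) le_rfl)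
  have hχ1 : ∀ x ∈ U m, χ x = 1 := fun x hx => hone x hx.le
  have hχ0 : ∀ x ∈ U m, ∀ i, gradient χ x i = 0 := fun x hx i => by
    have : χ =ᶠ[𝓝 x] fun _ => (1 : ℝ) := by
      filter_upwards [(hUo m).mem_nhds hx] with y hy using hχ1 y hy
    rw [grad_apply, this.fderiv_eq]; simp
  have h0 : IsTest Ω (fun _ => (0 : ℝ)) := by
    simpa using isTest_mul_left hχ (a := fun _ => 0) contDiff_const
  have hg0 : ∀ x i, gradient (fun _ : Euc n => (0 : ℝ)) x i = 0 := fun x i => by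
    simp
  have hφ2 : AEMeasurable (fun x => φ x ^ 2) (volume.restrict (U m)) := by
    refine ((((hF' _ hχ).add (hF' _ hχ.neg)).sub ((hF' _ h0).const_mul 2)).const_mul
      (1 / 2)).congr ?_
    filter_upwards [ae_restrict_mem (hUo m).measurableSet] with x hx
    simp only [Pi.add_apply, Pi.sub_apply, gradient_neg', hχ1 x hx, hχ0 x hx, hg0, neg_zero, sub_zero]
    ring
  have hφm : AEMeasurable φ (volume.restrict (U m)) := by
    refine (Real.continuous_sqrt.measurable.comp_aemeasurable hφ2).congr ?_
    filter_upwards [ae_restrict_mem (hUo m).measurableSet] with x hx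
    exact Real.sqrt_sq (hφ x (hUΩ m hx)).le
  have hvm : AEMeasurable v (volume.restrict (U m)) := by
    refine (((hF' _ hχ.neg).sub (hF' _ hχ)).div (hφ2.const_mul 4)).congr ?_
    filter_upwards [ae_restrict_mem (hUo m).measurableSet] with x hx
    have := hφ x (hUΩ m hx)
    simp only [Pi.div_apply, Pi.sub_apply, gradient_neg', hχ1 x hx, hχ0 x hx, neg_zero, sub_zero]
    field_simp
    ring
  refine ⟨hφm, hvm, fun i => ?_⟩
  have hψ : IsTest Ω (fun x => x i * χ x) := isTest_mul_left hχ (by fun_prop)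
  have hψg : ∀ x ∈ U m, ∀ j, gradient (fun x => x i * χ x) x j = if j = i then 1 else 0 := by
    intro x hx j
    have : (fun x => x i * χ x) =ᶠ[𝓝 x] fun x => (EuclideanSpace.proj i : Euc n →L[ℝ] ℝ) x := by
      filter_upwards [(hUo m).mem_nhds hx] with y hy
      simp [hχ1 y hy]
    rw [grad_apply, this.fderiv_eq, ContinuousLinearMap.fderiv]
    simp [eq_comm]
  have hxi : AEMeasurable (fun x : Euc n => x i) (volume.restrict (U m)) :=
    (by fun_prop : Continuous fun x : Euc n => x i).aemeasurable
  refine ((((hF' _ hψ.neg).sub (hF' _ hψ)).div (hφ2.const_mul 4)).sub (hvm.mul hxi)).congr ?_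
  filter_upwards [ae_restrict_mem (hUo m).measurableSet] with x hx
  have := hφ x (hUΩ m hx)
  have hs : ∑ j, (g x j - -(if j = i then (1 : ℝ) else 0)) ^ 2
      = ∑ j, (g x j - (if j = i then (1 : ℝ) else 0)) ^ 2 + 4 * g x i := by
    rw [← sub_eq_iff_eq_add', ← Finset.sum_sub_distrib, Finset.sum_eq_single i]
    · simp; ring
    · intro j _ hj; simp [hj]
    · simp
  simp only [Pi.div_apply, Pi.sub_apply, Pi.mul_apply, gradient_neg', hχ1 x hx, hψg x hx, hs]
  field_simp
  ring

/-! ### Truncation -/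

lemma sum_gradient_sq {n : ℕ} (u : Euc n → ℝ) (x : Euc n) :
    ∑ i, gradient u x i ^ 2 = ‖fderiv ℝ u x‖ ^ 2 := by
  have h : ‖gradient u x‖ = ‖fderiv ℝ u x‖ := by simp [gradient]
  rw [← h, EuclideanSpace.norm_sq_eq]
  simp

/-- `M sin (t / M)` is a bounded smooth replacement of `t`; it tends to `t` as `M → ∞`. -/
lemma tendsto_mul_sin (t : ℝ) :
    Tendsto (fun m : ℕ => ((m : ℝ) + 1) * sin (t / ((m : ℝ) + 1))) atTop (𝓝 t) := by
  have h0 : Tendsto (fun m : ℕ => t / ((m : ℝ) + 1)) atTop (𝓝 0) :=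
    tendsto_const_nhds.div_atTop (tendsto_natCast_atTop_atTop.atTop_add tendsto_const_nhds)
  have h1 := ((Real.continuous_sinc.tendsto 0).comp h0).const_mul t
  rw [Real.sinc_zero, mul_one] at h1
  refine h1.congr fun m => ?_
  rcases eq_or_ne t 0 with rfl | ht
  · simp
  have hm : ((m : ℝ) + 1) ≠ 0 := by positivity
  rw [Function.comp_apply, Real.sinc_of_ne_zero (div_ne_zero ht hm)]
  field_simp

/-- Cutting off near the boundary and truncating: `η M sin (v / M)` is close to `v` in the weighted
space when `M` is large and the weighted Dirichlet energy of `η` is much smaller than `M ^ (-2)`. -/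
lemma truncation_approx {n : ℕ} {Ω : Set (Euc n)} (hΩ : IsOpen Ω) (hc : (Ωᶜ).Nonempty)
    {φ v : Euc n → ℝ} {g : Euc n → Fin n → ℝ}
    (hφm : AEMeasurable φ (volume.restrict Ω)) (hvm : AEMeasurable v (volume.restrict Ω))
    (hgm : ∀ i, AEMeasurable (fun x => g x i) (volume.restrict Ω))
    (hint : IntegrableOn (fun x => ((v x) ^ 2 + ∑ i, (g x i) ^ 2) * (φ x) ^ 2) Ω volume)
    (hcut : ∀ δ : ℝ, 0 < δ → ∃ η : Euc n → ℝ, IsTest Ω η ∧ (∀ x, 0 ≤ η x) ∧ (∀ x, η x ≤ 1) ∧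
      (∀ x, δ ≤ infDist x Ωᶜ → η x = 1) ∧
      ∫⁻ x in Ω, ENNReal.ofReal (‖fderiv ℝ η x‖ ^ 2) * ENNReal.ofReal (φ x ^ 2) ≤ ENNReal.ofReal δ)
    {ε : ℝ≥0∞} (hε : 0 < ε) :
    ∃ (η : Euc n → ℝ) (M : ℝ), IsTest Ω η ∧ (∀ x, 0 ≤ η x) ∧ (∀ x, η x ≤ 1) ∧ 0 < M ∧
      ∫⁻ x in Ω, ENNReal.ofReal (((v x - η x * (M * sin (v x / M))) ^ 2 +
        ∑ i, (g x i - (gradient η x i * (M * sin (v x / M)) + η x * (cos (v x / M) * g x i))) ^ 2)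
          * φ x ^ 2) < ε := by
  have hM : ∀ m : ℕ, (0 : ℝ) < (m : ℝ) + 1 := fun m => by positivity
  choose η hη h0 h1 hone hE using fun m : ℕ => hcut (1 / ((m : ℝ) + 1) ^ 3) (by positivity)
  -- the part controlled by dominated convergence
  let T : ℕ → Euc n → ℝ≥0∞ := fun m x => ENNReal.ofReal
    (((v x - η m x * (((m : ℝ) + 1) * sin (v x / ((m : ℝ) + 1)))) ^ 2 +
      ∑ i, 2 * (g x i * (1 - η m x * cos (v x / ((m : ℝ) + 1)))) ^ 2) * φ x ^ 2)
  have hηm : ∀ m, AEMeasurable (η m) (volume.restrict Ω) := fun m =>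
    (hη m).1.continuous.aemeasurable
  have hsinm : ∀ M : ℝ, AEMeasurable (fun x => sin (v x / M)) (volume.restrict Ω) := fun M =>
    Real.measurable_sin.comp_aemeasurable (hvm.div_const M)
  have hcosm : ∀ M : ℝ, AEMeasurable (fun x => cos (v x / M)) (volume.restrict Ω) := fun M =>
    Real.measurable_cos.comp_aemeasurable (hvm.div_const M)
  have hTm : ∀ m, AEMeasurable (T m) (volume.restrict Ω) := fun m => by
    refine AEMeasurable.ennreal_ofReal ((AEMeasurable.add ?_ ?_).mul (hφm.pow_const 2))
    · exact (hvm.sub ((hηm m).mul ((hsinm _).const_mul _))).pow_const 2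
    · refine Finset.aemeasurable_fun_sum _ fun i _ => ?_
      exact (((hgm i).mul (((hηm m).mul (hcosm _)).const_sub 1)).pow_const 2).const_mul 2
  have hTlim : Tendsto (fun m => ∫⁻ x in Ω, T m x) atTop (𝓝 (∫⁻ x in Ω, 0)) := by
    refine tendsto_lintegral_of_dominated_convergence'
      (fun x => ENNReal.ofReal (8 * (((v x) ^ 2 + ∑ i, (g x i) ^ 2) * (φ x) ^ 2))) hTm ?_ ?_ ?_
    · intro m
      refine Eventually.of_forall fun x => ENNReal.ofReal_le_ofReal ?_
      rw [← mul_assoc 8, mul_add 8, Finset.mul_sum _ _ 8]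
      refine mul_le_mul_of_nonneg_right (add_le_add ?_ (Finset.sum_le_sum fun i _ => ?_))
        (sq_nonneg _)
      · have hs : |η m x * (((m : ℝ) + 1) * sin (v x / ((m : ℝ) + 1)))| ≤ |v x| := by
          rw [abs_mul, abs_of_nonneg (h0 m x)]
          refine (mul_le_of_le_one_left (abs_nonneg _) (h1 m x)).trans ?_
          rw [abs_mul, abs_of_pos (hM m)]
          refine (mul_le_mul_of_nonneg_left Real.abs_sin_le_abs (hM m).le).trans (le_of_eq ?_)
          rw [abs_div, abs_of_pos (hM m)]
          field_simp
        have hs2 := sq_le_sq.2 hs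
        nlinarith [sq_nonneg (v x + η m x * (((m : ℝ) + 1) * sin (v x / ((m : ℝ) + 1)))),
          sq_nonneg (v x)]
      · have hs : |η m x * cos (v x / ((m : ℝ) + 1))| ≤ 1 := by
          rw [abs_mul, abs_of_nonneg (h0 m x)]
          exact mul_le_one₀ (h1 m x) (abs_nonneg _) (Real.abs_cos_le_one _)
        have hs2 := abs_le.1 hs
        have : (1 - η m x * cos (v x / ((m : ℝ) + 1))) ^ 2 ≤ 4 := by nlinarith
        rw [mul_pow]
        nlinarith [sq_nonneg (g x i)]
    · exact (hint.const_mul 8).lintegral_lt_top.ne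
    · filter_upwards [ae_restrict_mem hΩ.measurableSet] with x hx
      have hpos : 0 < infDist x Ωᶜ :=
        (hΩ.isClosed_compl.notMem_iff_infDist_pos hc).1 fun h => h hx
      have hpow : Tendsto (fun m : ℕ => 1 / ((m : ℝ) + 1) ^ 3) atTop (𝓝 0) := by
        have := (tendsto_one_div_add_atTop_nhds_zero_nat (𝕜 := ℝ)).pow 3
        simpa using this
      have hev : ∀ᶠ m : ℕ in atTop, η m x = 1 := by
        filter_upwards [hpow.eventually (Iio_mem_nhds hpos)] with m hm
        exact hone m x (le_of_lt hm)
      have hη1 : Tendsto (fun m => η m x) atTop (𝓝 1) :=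
        tendsto_const_nhds.congr' (hev.mono fun m hm => hm.symm)
      have hcos : Tendsto (fun m : ℕ => cos (v x / ((m : ℝ) + 1))) atTop (𝓝 1) := by
        have h0 : Tendsto (fun m : ℕ => v x / ((m : ℝ) + 1)) atTop (𝓝 0) :=
          tendsto_const_nhds.div_atTop (tendsto_natCast_atTop_atTop.atTop_add tendsto_const_nhds)
        have := (Real.continuous_cos.tendsto 0).comp h0
        rwa [Real.cos_zero] at this
      have hl := (((hη1.mul (tendsto_mul_sin (v x))).const_sub (v x)).pow 2).add
        (tendsto_finsetSum Finset.univ fun i _ =>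
          ((((hη1.mul hcos).const_sub 1).const_mul (g x i)).pow 2).const_mul 2)
      have := ENNReal.tendsto_ofReal (hl.mul_const (φ x ^ 2))
      simpa using this
  have hlim : Tendsto (fun m : ℕ => (∫⁻ x in Ω, T m x) + ENNReal.ofReal (2 * (1 / ((m : ℝ) + 1))))
      atTop (𝓝 0) := by
    have h2 := ENNReal.tendsto_ofReal
      ((tendsto_one_div_add_atTop_nhds_zero_nat (𝕜 := ℝ)).const_mul 2)
    simpa using hTlim.add h2
  obtain ⟨m, hm⟩ := (hlim.eventually (Iio_mem_nhds hε)).exists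
  refine ⟨η m, (m : ℝ) + 1, hη m, h0 m, h1 m, hM m, lt_of_le_of_lt ?_ hm⟩
  have hpt : ∀ x, ENNReal.ofReal (((v x - η m x * (((m : ℝ) + 1) * sin (v x / ((m : ℝ) + 1)))) ^ 2 +
        ∑ i, (g x i - (gradient (η m) x i * (((m : ℝ) + 1) * sin (v x / ((m : ℝ) + 1))) +
          η m x * (cos (v x / ((m : ℝ) + 1)) * g x i))) ^ 2) * φ x ^ 2) ≤
      T m x + ENNReal.ofReal (2 * ((m : ℝ) + 1) ^ 2) *
        (ENNReal.ofReal (‖fderiv ℝ (η m) x‖ ^ 2) * ENNReal.ofReal (φ x ^ 2)) := by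
    intro x
    rw [← ENNReal.ofReal_mul (by positivity), ← ENNReal.ofReal_mul (by positivity),
      ← ENNReal.ofReal_add (mul_nonneg (add_nonneg (sq_nonneg _)
        (Finset.sum_nonneg fun i _ => by positivity)) (sq_nonneg _)) (by positivity)]
    refine ENNReal.ofReal_le_ofReal ?_
    rw [← mul_assoc (2 * ((m : ℝ) + 1) ^ 2), ← add_mul, ← sum_gradient_sq, add_assoc, Finset.mul_sum,
      ← Finset.sum_add_distrib]
    refine mul_le_mul_of_nonneg_right (add_le_add le_rfl (Finset.sum_le_sum fun i _ => ?_))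
      (sq_nonneg _)
    set s := sin (v x / ((m : ℝ) + 1))
    set q := cos (v x / ((m : ℝ) + 1))
    set M := (m : ℝ) + 1
    have hs : (gradient (η m) x i * (M * s)) ^ 2 ≤ M ^ 2 * gradient (η m) x i ^ 2 := by
      have : s ^ 2 ≤ 1 := Real.sin_sq_le_one _
      have h3 : 0 ≤ (gradient (η m) x i) ^ 2 * M ^ 2 := by positivity
      calc (gradient (η m) x i * (M * s)) ^ 2 = ((gradient (η m) x i) ^ 2 * M ^ 2) * s ^ 2 := by ring
        _ ≤ ((gradient (η m) x i) ^ 2 * M ^ 2) * 1 := by gcongr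
        _ = _ := by ring
    nlinarith [sq_nonneg (g x i * (1 - η m x * q) + gradient (η m) x i * (M * s))]
  refine (lintegral_mono hpt).trans ?_
  rw [lintegral_add_left' (hTm m), lintegral_const_mul' _ _ ENNReal.ofReal_ne_top]
  gcongr
  refine (mul_le_mul_right (hE m) _).trans (le_of_eq ?_)
  rw [← ENNReal.ofReal_mul (by positivity)]
  congr 1
  have := (hM m).ne'
  field_simp

/-! ### Smooth approximation -/

/-- On compact sets square integrability implies integrability, as `|f| ≤ 1 + f ^ 2`. -/
lemma integrable_of_sq_le {n : ℕ} {Ω K : Set (Euc n)} (hK : IsCompact K) (hKΩ : K ⊆ Ω)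
    {f G : Euc n → ℝ} (hfm : AEMeasurable f (volume.restrict Ω)) (hf0 : ∀ x, x ∉ K → f x = 0)
    (hG : IntegrableOn G K) {C : ℝ} (hle : ∀ x, f x ^ 2 ≤ C * G x) :
    Integrable f ∧ Integrable (fun x => f x ^ 2) := by
  have hs : Function.support f ⊆ K := fun x hx => by
    by_contra h
    exact hx (hf0 x h)
  have hs2 : Function.support (fun x => f x ^ 2) ⊆ K := fun x hx => by
    by_contra h
    exact hx (by simp [hf0 x h])
  have hm : AEStronglyMeasurable f (volume.restrict K) :=
    (hfm.mono_measure (Measure.restrict_mono hKΩ le_rfl)).aestronglyMeasurable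
  have h2 : IntegrableOn (fun x => f x ^ 2) K :=
    (hG.const_mul C).mono' (hm.pow 2) (Eventually.of_forall fun x => by
      rw [Real.norm_of_nonneg (sq_nonneg _)]; exact hle x)
  have h1 : IntegrableOn f K := by
    refine Integrable.mono' ((integrableOn_const (C := (1 : ℝ)) hK.measure_lt_top.ne).add h2) hm
      (Eventually.of_forall fun x => ?_)
    rw [Real.norm_eq_abs, Pi.add_apply, ← sq_abs]
    nlinarith [sq_nonneg (|f x| - 1)]
  exact ⟨(integrableOn_iff_integrable_of_support_subset hs).1 h1,
    (integrableOn_iff_integrable_of_support_subset hs2).1 h2⟩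

lemma gradient_truncation {n : ℕ} {η u : Euc n → ℝ} {x : Euc n} (hη : DifferentiableAt ℝ η x)
    (hu : DifferentiableAt ℝ u x) {M : ℝ} (hM : 0 < M) (i : Fin n) :
    gradient (fun y => M * sin (u y / M) * η y) x i =
      gradient η x i * (M * sin (u x / M)) + η x * (cos (u x / M) * gradient u x i) := by
  have h := (((hu.hasFDerivAt.mul_const M⁻¹).sin).const_mul M).fun_mul hη.hasFDerivAt
  simp only [← div_eq_mul_inv] at h
  rw [grad_apply, grad_apply, grad_apply, h.fderiv]
  simp only [add_apply, smul_apply, smul_eq_mul]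
  field_simp

lemma IsTest.gradient_sq_bound {n : ℕ} {Ω : Set (Euc n)} {χ : Euc n → ℝ} (h : IsTest Ω χ) :
    ∃ L : ℝ, ∀ x i, gradient χ x i ^ 2 ≤ L ^ 2 := by
  obtain ⟨L, hL⟩ := (h.1.continuous_fderiv (by simp)).bounded_above_of_compact_support
    (h.2.1.fderiv ℝ)
  refine ⟨L, fun x i => ?_⟩
  calc gradient χ x i ^ 2 ≤ ∑ j, gradient χ x j ^ 2 :=
        Finset.single_le_sum (f := fun j => gradient χ x j ^ 2) (fun _ _ => sq_nonneg _)
          (Finset.mem_univ i)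
    _ = ‖fderiv ℝ χ x‖ ^ 2 := sum_gradient_sq χ x
    _ ≤ L ^ 2 := by gcongr; exact hL x

lemma gradient_eq_zero_of_notMem_tsupport {n : ℕ} {χ : Euc n → ℝ} {x : Euc n}
    (h : x ∉ tsupport χ) (i : Fin n) : gradient χ x i = 0 := by
  rw [grad_apply, fderiv_of_notMem_tsupport ℝ h]; simp

/-- Pointwise estimate of the difference of two truncations `η M sin (· / M)`, where `s`, `t` are the
values of the functions, `a`, `b` their gradients, `e`, `d` the value and gradient of `η`, and `p` the
value of the weight. -/
lemma truncation_error_le {n : ℕ} {M L B p e : ℝ} (hM : 0 < M) (he0 : 0 ≤ e) (he1 : e ≤ 1)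
    {d : Fin n → ℝ} (hd : ∀ i, d i ^ 2 ≤ L ^ 2) (s t : ℝ) (a b : Fin n → ℝ) (hp0 : 0 ≤ p)
    (hp : p ≤ B) :
    ((e * (M * sin (s / M)) - M * sin (t / M) * e) ^ 2 +
      ∑ i, (d i * (M * sin (s / M)) + e * (cos (s / M) * a i)
        - (d i * (M * sin (t / M)) + e * (cos (t / M) * b i))) ^ 2) * p ≤
      B * (1 + n * (3 * L ^ 2)) * (t - s) ^ 2 +
        ∑ i, (B * 3 * ((cos (s / M) - cos (t / M)) * a i) ^ 2 + B * 3 * (b i - a i) ^ 2) := by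
  have he2 : e ^ 2 ≤ 1 := pow_le_one₀ he0 he1
  have hsin : (M * sin (s / M) - M * sin (t / M)) ^ 2 ≤ (t - s) ^ 2 := by
    refine sq_le_sq.2 ?_
    rw [← mul_sub, abs_mul, abs_of_pos hM, abs_sub_comm t]
    refine (mul_le_mul_of_nonneg_left (Real.abs_sin_sub_sin_le _ _) hM.le).trans (le_of_eq ?_)
    rw [← sub_div, abs_div, abs_of_pos hM]
    field_simp
  have hfirst : (e * (M * sin (s / M)) - M * sin (t / M) * e) ^ 2 ≤ (t - s) ^ 2 := by
    calc _ = e ^ 2 * (M * sin (s / M) - M * sin (t / M)) ^ 2 := by ring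
      _ ≤ 1 * (t - s) ^ 2 := mul_le_mul he2 hsin (sq_nonneg _) zero_le_one
      _ = _ := one_mul _
  have hsecond : ∀ i, (d i * (M * sin (s / M)) + e * (cos (s / M) * a i)
      - (d i * (M * sin (t / M)) + e * (cos (t / M) * b i))) ^ 2 ≤
      3 * L ^ 2 * (t - s) ^ 2 +
        (3 * ((cos (s / M) - cos (t / M)) * a i) ^ 2 + 3 * (b i - a i) ^ 2) := by
    intro i
    have ha : (d i * (M * sin (s / M) - M * sin (t / M))) ^ 2 ≤ L ^ 2 * (t - s) ^ 2 := by
      rw [mul_pow]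
      exact mul_le_mul (hd i) hsin (sq_nonneg _) (sq_nonneg _)
    have hb : (e * ((cos (s / M) - cos (t / M)) * a i)) ^ 2
        ≤ ((cos (s / M) - cos (t / M)) * a i) ^ 2 := by
      rw [mul_pow e]; exact mul_le_of_le_one_left (sq_nonneg _) he2
    have hce : (e * cos (t / M)) ^ 2 ≤ 1 := by
      rw [mul_pow]; exact mul_le_one₀ he2 (sq_nonneg _) (Real.cos_sq_le_one _)
    have hcc : (e * cos (t / M) * (b i - a i)) ^ 2 ≤ (b i - a i) ^ 2 := by
      rw [mul_pow (e * cos (t / M))]; exact mul_le_of_le_one_left (sq_nonneg _) hce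
    have hsq : ∀ p q r : ℝ, (p + q - r) ^ 2 ≤ 3 * p ^ 2 + 3 * q ^ 2 + 3 * r ^ 2 := fun p q r => by
      nlinarith [sq_nonneg (p - q), sq_nonneg (p + r), sq_nonneg (q + r)]
    refine (le_of_eq ?_).trans ((hsq (d i * (M * sin (s / M) - M * sin (t / M)))
      (e * ((cos (s / M) - cos (t / M)) * a i)) (e * cos (t / M) * (b i - a i))).trans ?_)
    · ring
    · linarith
  have htot := add_le_add hfirst (Finset.sum_le_sum fun i (_ : i ∈ Finset.univ) => hsecond i)
  refine (mul_le_mul htot hp hp0 (by positivity)).trans (le_of_eq ?_)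
  rw [Finset.sum_add_distrib, Finset.sum_const, Finset.card_univ, Fintype.card_fin,
    nsmul_eq_mul, Finset.sum_congr rfl fun i _ => show
      B * 3 * ((cos (s / M) - cos (t / M)) * a i) ^ 2 + B * 3 * (b i - a i) ^ 2 =
      B * (3 * ((cos (s / M) - cos (t / M)) * a i) ^ 2 + 3 * (b i - a i) ^ 2) by ring,
    ← Finset.mul_sum]
  ring

/-- Away from the boundary the weight is bounded, and `η M sin (v / M)` is approximated by the test
functions `η M sin (u_m / M)`, where `u_m` mollifies a localization of `v`. -/
lemma smooth_approx {n : ℕ} {Ω : Set (Euc n)} (hΩ : IsOpen Ω) (hb : Bornology.IsBounded Ω)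
    (hc : (Ωᶜ).Nonempty) {φ v : Euc n → ℝ} {g : Euc n → Fin n → ℝ}
    (hvm : AEMeasurable v (volume.restrict Ω))
    (hgm : ∀ i, AEMeasurable (fun x => g x i) (volume.restrict Ω))
    (hgrad : IsWeakGradOn Ω v g)
    (hφK : ∀ K, IsCompact K → K ⊆ Ω → ∃ B, ∀ x ∈ K, φ x ^ 2 ≤ B)
    (hloc : ∀ K, IsCompact K → K ⊆ Ω → IntegrableOn (fun x => v x ^ 2 + ∑ i, g x i ^ 2) K)
    {η : Euc n → ℝ} (hη : IsTest Ω η) (h0 : ∀ x, 0 ≤ η x) (h1 : ∀ x, η x ≤ 1)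
    {M : ℝ} (hM : 0 < M) {ε : ℝ≥0∞} (hε : 0 < ε) :
    ∃ ψ, IsTest Ω ψ ∧
      ∫⁻ x in Ω, ENNReal.ofReal (((η x * (M * sin (v x / M)) - ψ x) ^ 2 +
        ∑ i, (gradient η x i * (M * sin (v x / M)) + η x * (cos (v x / M) * g x i)
          - gradient ψ x i) ^ 2) * φ x ^ 2) < ε := by
  -- `χ` is a test function equal to `1` near the support of `η`
  obtain ⟨r, hr, hrη⟩ : ∃ r > 0, ∀ x ∈ tsupport η, r < infDist x Ωᶜ := by
    rcases (tsupport η).eq_empty_or_nonempty with he | hne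
    · exact ⟨1, one_pos, fun x hx => by simp [he] at hx⟩
    · obtain ⟨y, hy, hmin⟩ := hη.2.1.exists_isMinOn hne (continuous_infDist_pt Ωᶜ).continuousOn
      have hpos : 0 < infDist y Ωᶜ :=
        (hΩ.isClosed_compl.notMem_iff_infDist_pos hc).1 fun h => h (hη.2.2 hy)
      exact ⟨infDist y Ωᶜ / 2, by positivity, fun x hx => lt_of_lt_of_le (by linarith) (hmin hx)⟩
  obtain ⟨χ, hχ, hχ0, hχ1, hχone⟩ := exists_test_one hb hr
  have hχη : ∀ x ∈ tsupport η, χ x = 1 ∧ ∀ i, gradient χ x i = 0 := fun x hx => by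
    refine ⟨hχone x (hrη x hx).le, fun i => ?_⟩
    have : χ =ᶠ[𝓝 x] fun _ => (1 : ℝ) := by
      filter_upwards [(isOpen_lt continuous_const (continuous_infDist_pt Ωᶜ)).mem_nhds
        (hrη x hx)] with y hy using hχone y (le_of_lt hy)
    rw [grad_apply, this.fderiv_eq]; simp
  obtain ⟨B, hB⟩ := hφK _ hη.2.1 hη.2.2
  obtain ⟨L, hL⟩ := hη.gradient_sq_bound
  obtain ⟨L', hL'⟩ := hχ.gradient_sq_bound
  have hG := hloc _ hχ.2.1 hχ.2.2
  have hχm : AEMeasurable χ (volume.restrict Ω) := hχ.1.continuous.aemeasurable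
  have hχm' : ∀ i, AEMeasurable (fun x => gradient χ x i) (volume.restrict Ω) := fun i => by
    simp only [grad_apply]
    exact ((hχ.1.continuous_fderiv (by simp)).clm_apply continuous_const).aemeasurable
  have hχ2 : ∀ x, χ x ^ 2 ≤ 1 := fun x => pow_le_one₀ (hχ0 x) (hχ1 x)
  have hgi : ∀ x i, g x i ^ 2 ≤ ∑ j, g x j ^ 2 := fun x i =>
    Finset.single_le_sum (f := fun j => g x j ^ 2) (fun _ _ => sq_nonneg _) (Finset.mem_univ i)
  have hgs : ∀ x, 0 ≤ ∑ j, g x j ^ 2 := fun x => Finset.sum_nonneg fun _ _ => sq_nonneg _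
  have hz : ∀ x, x ∉ tsupport χ → χ x = 0 := fun x hx => image_eq_zero_of_notMem_tsupport hx
  have hsq1 : ∀ x, (χ x * v x) ^ 2 ≤ v x ^ 2 := fun x => by
    rw [mul_pow]; exact mul_le_of_le_one_left (sq_nonneg _) (hχ2 x)
  have hsq2 : ∀ x i, (χ x * g x i) ^ 2 ≤ g x i ^ 2 := fun x i => by
    rw [mul_pow]; exact mul_le_of_le_one_left (sq_nonneg _) (hχ2 x)
  have hsq3 : ∀ x i, (gradient χ x i * v x) ^ 2 ≤ L' ^ 2 * v x ^ 2 := fun x i => by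
    rw [mul_pow]; exact mul_le_mul_of_nonneg_right (hL' x i) (sq_nonneg _)
  set f : Euc n → ℝ := fun x => χ x * v x with hf
  set h : Fin n → Euc n → ℝ := fun i x => χ x * g x i + gradient χ x i * v x with hh
  obtain ⟨hf1, hf2⟩ : Integrable f ∧ Integrable (fun x => f x ^ 2) :=
    integrable_of_sq_le hχ.2.1 hχ.2.2 (hχm.mul hvm) (fun x hx => by simp [hz x hx]) hG (C := 1)
      fun x => by
        have := hsq1 x
        have := hgs x
        simp only [Pi.mul_apply]; linarith
  have hχg : ∀ i, Integrable (fun x => χ x * g x i) := fun i =>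
    (integrable_of_sq_le hχ.2.1 hχ.2.2 (hχm.mul (hgm i)) (fun x hx => by simp [hz x hx]) hG (C := 1)
      fun x => by
        have := hsq2 x i
        have := hgi x i
        have := sq_nonneg (v x)
        simp only [Pi.mul_apply]; linarith).1
  have hχv : ∀ i, Integrable (fun x => gradient χ x i * v x) := fun i =>
    (integrable_of_sq_le hχ.2.1 hχ.2.2 ((hχm' i).mul hvm)
      (fun x hx => by simp [gradient_eq_zero_of_notMem_tsupport hx]) hG (C := L' ^ 2)
      fun x => by
        have := hsq3 x i
        have := mul_nonneg (sq_nonneg L') (hgs x)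
        simp only [Pi.mul_apply]; linarith).1
  have hh12 : ∀ i, Integrable (h i) ∧ Integrable (fun x => h i x ^ 2) := fun i =>
    integrable_of_sq_le hχ.2.1 hχ.2.2 ((hχm.mul (hgm i)).add ((hχm' i).mul hvm))
      (fun x hx => by simp [hh, hz x hx, gradient_eq_zero_of_notMem_tsupport hx]) hG
      (C := 2 + 2 * L' ^ 2) fun x => by
        have := hsq3 x i
        have := hsq2 x i
        have := hgi x i
        have := mul_nonneg (sq_nonneg L') (hgs x)
        have := sq_nonneg (v x)
        simp only [hh]
        nlinarith [sq_nonneg (χ x * g x i - gradient χ x i * v x)]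
  let u : ℕ → Euc n → ℝ := fun m => mollify m f
  have hus : ∀ m, ContDiff ℝ (⊤ : ℕ∞) (u m) := fun m => contDiff_mollify m hf1
  have hug : ∀ m x i, gradient (u m) x i = mollify m (h i) x := fun m x i =>
    gradient_mollify hgrad hχ hf1 hχv hχg m x i
  have hψ : ∀ m, IsTest Ω (fun x => M * sin (u m x / M) * η x) := fun m =>
    isTest_mul_left hη (contDiff_const.mul (((hus m).div_const M).sin))
  have hfm : AEMeasurable f := hf1.aestronglyMeasurable.aemeasurable
  have hhm : ∀ i, AEMeasurable (h i) := fun i => (hh12 i).1.aestronglyMeasurable.aemeasurable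
  have hum : ∀ m, Measurable (u m) := fun m => (hus m).continuous.measurable
  -- the three quantities that control the error
  let X : ℕ → Euc n → ℝ≥0∞ := fun m x => ENNReal.ofReal ((u m x - f x) ^ 2)
  let Y : ℕ → Fin n → Euc n → ℝ≥0∞ := fun m i x =>
    ENNReal.ofReal (((cos (f x / M) - cos (u m x / M)) * h i x) ^ 2)
  let Z : ℕ → Fin n → Euc n → ℝ≥0∞ := fun m i x =>
    ENNReal.ofReal ((mollify m (h i) x - h i x) ^ 2)
  have hX : Tendsto (fun m => ∫⁻ x, X m x) atTop (𝓝 0) := mollify_tendsto_L2 hf1 hf2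
  have hZ : ∀ i, Tendsto (fun m => ∫⁻ x, Z m i x) atTop (𝓝 0) := fun i =>
    mollify_tendsto_L2 (hh12 i).1 (hh12 i).2
  have hXm : ∀ m, AEMeasurable (X m) := fun m =>
    (((hum m).aemeasurable.sub hfm).pow_const 2).ennreal_ofReal
  have hYm : ∀ m i, AEMeasurable (Y m i) := fun m i => by
    refine AEMeasurable.ennreal_ofReal (AEMeasurable.pow_const (AEMeasurable.mul ?_ (hhm i)) 2)
    exact (Real.measurable_cos.comp_aemeasurable (hfm.div_const M)).sub
      (Real.measurable_cos.comp_aemeasurable ((hum m).aemeasurable.div_const M))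
  have hZm : ∀ m i, AEMeasurable (Z m i) := fun m i =>
    ((((contDiff_mollify m (hh12 i).1).continuous.aemeasurable).sub
      (hhm i)).pow_const 2).ennreal_ofReal
  have hY : ∀ i, Tendsto (fun m => ∫⁻ x, Y m i x) atTop (𝓝 0) := fun i => by
    have := tendsto_lintegral_of_dominated_convergence' (f := fun _ => 0)
      (fun x => ENNReal.ofReal (4 * h i x ^ 2))
      (fun m => hYm m i) (fun m => Eventually.of_forall fun x => ENNReal.ofReal_le_ofReal ?_)
      ((hh12 i).2.const_mul 4).lintegral_lt_top.ne ?_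
    · simpa using this
    · rw [mul_pow]
      refine mul_le_mul_of_nonneg_right ?_ (sq_nonneg _)
      have h3 := abs_le.1 (Real.abs_cos_le_one (f x / M))
      have h4 := abs_le.1 (Real.abs_cos_le_one (u m x / M))
      nlinarith
    · filter_upwards [mollify_ae_tendsto hf1.locallyIntegrable] with x hx
      have hcos := (Real.continuous_cos.tendsto (f x / M)).comp (hx.div_const M)
      have := ENNReal.tendsto_ofReal (((hcos.const_sub (cos (f x / M))).mul_const (h i x)).pow 2)
      simpa using this
  have hB0 : 0 ≤ max B 0 := le_max_right _ _
  let c : ℝ≥0∞ := ENNReal.ofReal (max B 0 * (1 + n * (3 * L ^ 2)))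
  let c' : ℝ≥0∞ := ENNReal.ofReal (max B 0 * 3)
  have hlim : Tendsto (fun m => c * (∫⁻ x, X m x) +
      ∑ i, (c' * (∫⁻ x, Y m i x) + c' * ∫⁻ x, Z m i x)) atTop (𝓝 0) := by
    have h1 := ENNReal.Tendsto.const_mul hX (Or.inr (ENNReal.ofReal_ne_top : c ≠ ∞))
    have h2 := tendsto_finsetSum Finset.univ fun i _ =>
      (ENNReal.Tendsto.const_mul (hY i) (Or.inr (ENNReal.ofReal_ne_top : c' ≠ ∞))).add
      (ENNReal.Tendsto.const_mul (hZ i) (Or.inr (ENNReal.ofReal_ne_top : c' ≠ ∞)))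
    simpa only [mul_zero, add_zero, Finset.sum_const_zero] using h1.add h2
  obtain ⟨m, hm⟩ := (hlim.eventually (Iio_mem_nhds hε)).exists
  refine ⟨_, hψ m, lt_of_le_of_lt ?_ hm⟩
  have hpt : ∀ x, ENNReal.ofReal (((η x * (M * sin (v x / M)) - M * sin (u m x / M) * η x) ^ 2 +
        ∑ i, (gradient η x i * (M * sin (v x / M)) + η x * (cos (v x / M) * g x i)
          - gradient (fun x => M * sin (u m x / M) * η x) x i) ^ 2) * φ x ^ 2) ≤
      c * X m x + ∑ i, (c' * Y m i x + c' * Z m i x) := by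
    intro x
    by_cases hx : x ∈ tsupport η
    · obtain ⟨hχx, hχx'⟩ := hχη x hx
      have hvx : v x = f x := by simp [hf, hχx]
      have hgx : ∀ i, g x i = h i x := fun i => by simp [hh, hχx, hχx']
      have hdη : DifferentiableAt ℝ η x := hη.1.differentiable (by simp) x
      have hdu : DifferentiableAt ℝ (u m) x := (hus m).differentiable (by simp) x
      simp only [gradient_truncation hdη hdu hM, hvx, hgx, hug, X, Y, Z, c, c']
      simp only [← ENNReal.ofReal_mul (mul_nonneg hB0 (by positivity : (0 : ℝ) ≤ 3)),
        ← ENNReal.ofReal_mul (mul_nonneg hB0 (by positivity : (0 : ℝ) ≤ 1 + n * (3 * L ^ 2)))]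
      simp only [← ENNReal.ofReal_add (mul_nonneg (mul_nonneg hB0 (by positivity : (0 : ℝ) ≤ 3))
        (sq_nonneg _)) (mul_nonneg (mul_nonneg hB0 (by positivity : (0 : ℝ) ≤ 3)) (sq_nonneg _))]
      rw [← ENNReal.ofReal_sum_of_nonneg fun i _ => by positivity,
        ← ENNReal.ofReal_add (by positivity) (Finset.sum_nonneg fun i _ => by positivity)]
      refine ENNReal.ofReal_le_ofReal ?_
      exact truncation_error_le hM (h0 x) (h1 x) (hL x) (f x) (u m x) (fun i => h i x)
        (fun i => mollify m (h i) x) (sq_nonneg _) ((hB x hx).trans (le_max_left _ 0))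
    · have hηx : η x = 0 := image_eq_zero_of_notMem_tsupport hx
      have hψx : x ∉ tsupport (fun x => M * sin (u m x / M) * η x) := fun hh =>
        hx (tsupport_mul_subset_right hh)
      simp [hηx, gradient_eq_zero_of_notMem_tsupport hx, gradient_eq_zero_of_notMem_tsupport hψx]
  refine (lintegral_mono hpt).trans ((setLIntegral_le_lintegral _ _).trans (le_of_eq ?_))
  rw [lintegral_add_left' ((hXm m).const_mul c), lintegral_const_mul' _ _ ENNReal.ofReal_ne_top,
    lintegral_finsetSum' (f := fun i x => c' * Y m i x + c' * Z m i x) _ fun i _ =>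
      ((hYm m i).const_mul c').add ((hZm m i).const_mul c')]
  congr 1
  refine Finset.sum_congr rfl fun i _ => ?_
  rw [lintegral_add_left' ((hYm m i).const_mul c'), lintegral_const_mul' _ _ ENNReal.ofReal_ne_top,
    lintegral_const_mul' _ _ ENNReal.ofReal_ne_top]

/-! ### Density of the test functions -/

/-- **Density theorem** (Theorem 3.8).  Let `n ≥ 2` and suppose
`c₁ ∏ d_k^{α_k} ≤ φ₁ ≤ c₂ ∏ d_k^{α_k}` on `Ω` with `c₁, c₂ > 0` and `α_k ≥ -(k-2)/2`
for `k = 1, …, n`.  Then `C₀^∞(Ω)` is dense in the weighted Sobolev space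
`H¹(Ω; φ₁²) = {v ∈ L²(Ω, φ₁²dx) : ∫_Ω φ₁²|∇v|² < ∞}` with norm
`‖v‖² = ∫_Ω φ₁²(v² + |∇v|²)`: for every `v` in the space (with weak gradient `g`) and
every `ε > 0` there is a test function `ψ` with `‖v - ψ‖² < ε`. -/
theorem density_of_test_functions
    {n : ℕ} (hn : 2 ≤ n) (S : Setting n)
    (α : Fin n → ℝ) (hα : ∀ k : Fin n, -((((k : ℕ) : ℝ) + 1) - 2) / 2 ≤ α k)
    (φ : Euc n → ℝ) (c₁ c₂ : ℝ) (hc₁ : 0 < c₁) (hc₂ : 0 < c₂)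
    (hbound : ∀ x ∈ S.Ω,
      c₁ * ∏ k, dΓ S k x ^ α k ≤ φ x ∧ φ x ≤ c₂ * ∏ k, dΓ S k x ^ α k)
    (v : Euc n → ℝ) (g : Euc n → Fin n → ℝ)
    (hgrad : IsWeakGradOn S.Ω v g)
    (hint : IntegrableOn (fun x => ((v x) ^ 2 + ∑ i, (g x i) ^ 2) * (φ x) ^ 2)
      S.Ω volume) :
    ∀ ε : ℝ, 0 < ε → ∃ ψ, IsTest S.Ω ψ ∧
      (∫ x in S.Ω, ((v x - ψ x) ^ 2 + ∑ i, (g x i - gradient ψ x i) ^ 2) * (φ x) ^ 2)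
        < ε := by
  intro ε hε
  have hcne : (S.Ωᶜ).Nonempty := nonempty_compl.2 (Setting.ne_univ hn S)
  by_cases hne : ∀ k, (S.Γ k).Nonempty ∨ α k = 0
  swap
  -- An empty piece has `infDist = 0`, and `0 ^ α = 0` for `α ≠ 0`: the weight vanishes.
  · push Not at hne
    obtain ⟨k, hk, hαk⟩ := hne
    have hφ0 : ∀ x ∈ S.Ω, φ x = 0 := fun x hx => by
      have hP : ∏ k, dΓ S k x ^ α k = 0 := Finset.prod_eq_zero (Finset.mem_univ k) (by
        simp [dΓ, hk, Real.zero_rpow hαk])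
      have := hbound x hx
      rw [hP, mul_zero, mul_zero] at this
      exact le_antisymm this.2 this.1
    obtain ⟨χ, hχ, -⟩ := exists_test_one S.bounded one_pos
    refine ⟨χ, hχ, ?_⟩
    rw [setIntegral_congr_fun S.isOpen.measurableSet (g := fun _ => (0 : ℝ)) fun x hx => by
      simp [hφ0 x hx]]
    simpa using hε
  by_cases hF : ∀ ψ, IsTest S.Ω ψ → AEStronglyMeasurable (fun x =>
      ((v x - ψ x) ^ 2 + ∑ i, (g x i - gradient ψ x i) ^ 2) * φ x ^ 2) (volume.restrict S.Ω)
  swap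
  -- The Bochner integral of a nonmeasurable function is `0`.
  · push Not at hF
    obtain ⟨ψ, hψ, hnot⟩ := hF
    refine ⟨ψ, hψ, ?_⟩
    rw [integral_non_aestronglyMeasurable hnot]
    exact hε
  have hW := fun {K : Set (Euc n)} (hK : IsCompact K) (hKΩ : K ⊆ S.Ω) =>
    weight_compact S α φ c₁ c₂ hc₁ hbound hne hK hKΩ
  have hφpos : ∀ x ∈ S.Ω, 0 < φ x := fun x hx => by
    obtain ⟨a, ha, b, hab⟩ := hW isCompact_singleton (singleton_subset_iff.2 hx)
    exact ha.trans_le (hab x rfl).1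
  obtain ⟨hφm, hvm, hgm⟩ := aemeasurable_data S.isOpen S.bounded hcne φ v g hφpos hF
  obtain ⟨r₁, hr₁, C, hC, hshell⟩ := shell_mass hn S α hα φ c₁ c₂ hc₁ hc₂ hbound
  have hφK : ∀ K, IsCompact K → K ⊆ S.Ω → ∃ B, ∀ x ∈ K, φ x ^ 2 ≤ B := fun K hK hKΩ => by
    obtain ⟨a, ha, b, hab⟩ := hW hK hKΩ
    exact ⟨b ^ 2, fun x hx => pow_le_pow_left₀ (hφpos x (hKΩ hx)).le (hab x hx).2 2⟩
  have hloc : ∀ K, IsCompact K → K ⊆ S.Ω →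
      IntegrableOn (fun x => v x ^ 2 + ∑ i, g x i ^ 2) K := fun K hK hKΩ => by
    obtain ⟨a, ha, b, hab⟩ := hW hK hKΩ
    refine Integrable.mono' ((hint.mono_set hKΩ).const_mul ((a ^ 2)⁻¹)) ?_ ?_
    · refine AEMeasurable.aestronglyMeasurable (AEMeasurable.mono_measure
        (AEMeasurable.add (hvm.pow_const 2) ?_) (Measure.restrict_mono hKΩ le_rfl))
      exact Finset.aemeasurable_fun_sum _ fun i _ => (hgm i).pow_const 2
    · filter_upwards [ae_restrict_mem hK.measurableSet] with x hx
      have hnn : 0 ≤ v x ^ 2 + ∑ i, g x i ^ 2 :=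
        add_nonneg (sq_nonneg _) (Finset.sum_nonneg fun _ _ => sq_nonneg _)
      rw [Real.norm_of_nonneg hnn, inv_mul_eq_div, le_div_iff₀ (by positivity)]
      gcongr
      exact (hab x hx).1
  have hε4 : 0 < ENNReal.ofReal (ε / 4) := ENNReal.ofReal_pos.2 (by positivity)
  obtain ⟨η, M, hη, h0, h1, hM, hA⟩ := truncation_approx S.isOpen hcne hφm hvm hgm hint
    (fun δ hδ => exists_cutoff S.isOpen S.bounded (fun x => ENNReal.ofReal (φ x ^ 2))
      (hφm.pow_const 2).ennreal_ofReal hr₁ hC hshell hδ) hε4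
  obtain ⟨ψ, hψ, hB⟩ := smooth_approx S.isOpen S.bounded hcne hvm hgm hgrad hφK hloc hη h0 h1 hM hε4
  refine ⟨ψ, hψ, ?_⟩
  rw [integral_eq_lintegral_of_nonneg_ae (Eventually.of_forall fun x => mul_nonneg (add_nonneg
    (sq_nonneg _) (Finset.sum_nonneg fun _ _ => sq_nonneg _)) (sq_nonneg _)) (hF ψ hψ)]
  refine ENNReal.toReal_lt_of_lt_ofReal ?_
  set y : Euc n → ℝ := fun x => η x * (M * sin (v x / M)) with hy
  set z : Euc n → Fin n → ℝ := fun x i =>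
    gradient η x i * (M * sin (v x / M)) + η x * (cos (v x / M) * g x i) with hz
  let P : Euc n → ℝ≥0∞ := fun x =>
    ENNReal.ofReal (((v x - y x) ^ 2 + ∑ i, (g x i - z x i) ^ 2) * φ x ^ 2)
  let Q : Euc n → ℝ≥0∞ := fun x =>
    ENNReal.ofReal (((y x - ψ x) ^ 2 + ∑ i, (z x i - gradient ψ x i) ^ 2) * φ x ^ 2)
  have hηm : AEMeasurable η (volume.restrict S.Ω) := hη.1.continuous.aemeasurable
  have hηm' : ∀ i, AEMeasurable (fun x => gradient η x i) (volume.restrict S.Ω) := fun i => by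
    simp only [grad_apply]
    exact ((hη.1.continuous_fderiv (by simp)).clm_apply continuous_const).aemeasurable
  have hsm : AEMeasurable (fun x => M * sin (v x / M)) (volume.restrict S.Ω) :=
    (Real.measurable_sin.comp_aemeasurable (hvm.div_const M)).const_mul M
  have hcm : AEMeasurable (fun x => cos (v x / M)) (volume.restrict S.Ω) :=
    Real.measurable_cos.comp_aemeasurable (hvm.div_const M)
  have hPm : AEMeasurable P (volume.restrict S.Ω) := by
    refine AEMeasurable.ennreal_ofReal ((AEMeasurable.add ?_ ?_).mul (hφm.pow_const 2))
    · exact (hvm.sub (hηm.mul hsm)).pow_const 2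
    · exact Finset.aemeasurable_fun_sum _ fun i _ =>
        ((hgm i).sub (((hηm' i).mul hsm).add (hηm.mul (hcm.mul (hgm i))))).pow_const 2
  have hsq : ∀ a b c : ℝ, (a - c) ^ 2 ≤ 2 * (a - b) ^ 2 + 2 * (b - c) ^ 2 := fun a b c => by
    nlinarith [sq_nonneg (a - b - (b - c))]
  have hpt : ∀ x, ENNReal.ofReal (((v x - ψ x) ^ 2 + ∑ i, (g x i - gradient ψ x i) ^ 2) * φ x ^ 2)
      ≤ 2 * P x + 2 * Q x := by
    intro x
    have e2 : (2 : ℝ≥0∞) = ENNReal.ofReal 2 := by simp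
    simp only [P, Q, e2]
    rw [← ENNReal.ofReal_mul zero_le_two, ← ENNReal.ofReal_mul zero_le_two,
      ← ENNReal.ofReal_add (by positivity) (by positivity)]
    refine ENNReal.ofReal_le_ofReal ?_
    have hsum : ∑ i, (g x i - gradient ψ x i) ^ 2 ≤
        2 * ∑ i, (g x i - z x i) ^ 2 + 2 * ∑ i, (z x i - gradient ψ x i) ^ 2 := by
      rw [Finset.mul_sum, Finset.mul_sum, ← Finset.sum_add_distrib]
      exact Finset.sum_le_sum fun i _ => hsq _ _ _
    rw [← mul_assoc, ← mul_assoc, ← add_mul]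
    refine mul_le_mul_of_nonneg_right ?_ (sq_nonneg _)
    linarith [hsq (v x) (y x) (ψ x)]
  calc _ ≤ ∫⁻ x in S.Ω, (2 * P x + 2 * Q x) := lintegral_mono hpt
    _ = 2 * (∫⁻ x in S.Ω, P x) + 2 * ∫⁻ x in S.Ω, Q x := by
      rw [lintegral_add_left' (hPm.const_mul 2), lintegral_const_mul' _ _ (by simp),
        lintegral_const_mul' _ _ (by simp)]
    _ < 2 * ENNReal.ofReal (ε / 4) + 2 * ENNReal.ofReal (ε / 4) :=
      ENNReal.add_lt_add ((ENNReal.mul_lt_mul_iff_right (by simp) (by simp)).2 hA)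
        ((ENNReal.mul_lt_mul_iff_right (by simp) (by simp)).2 hB)
    _ = ENNReal.ofReal ε := by
      have e4 : (2 : ℝ≥0∞) + 2 = ENNReal.ofReal 4 := by
        rw [show (4 : ℝ) = 2 + 2 by norm_num, ENNReal.ofReal_add zero_le_two zero_le_two]; simp
      rw [← add_mul, e4, ← ENNReal.ofReal_mul (by norm_num)]
      congr 1
      ring
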